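/- arXiv:2603.26484 — 3 statements merged into one kernel-verified Lean document; each statement's English description precedes it below -/
import Mathlib

section
/- If a d.c.e. real is neither left-c.e. nor right-c.e., then it is fully d.c.e. speedable, i.e., every d.c.e. approximation of it is speedable. -/
open Filter

/-- A computable approximation of a real `α`: a computable sequence of
rationals in `[0,1]` converging to `α`. -/
def IsCompApprox (a : ℕ → ℚ) (α : ℝ) : Prop :=
  Computable a ∧ (∀ s, a s ∈ Set.Icc (0 : ℚ) 1) ∧
    Tendsto (fun s => (a s : ℝ)) atTop (nhds α)

/-- A d.c.e. approximation: a computable approximation with bounded variation. -/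
def IsDCEApprox (a : ℕ → ℚ) (α : ℝ) : Prop :=
  IsCompApprox a α ∧ Summable (fun s => |(a (s + 1) : ℝ) - (a s : ℝ)|)

/-- A computable order: a nondecreasing unbounded computable function. -/
def IsComputableOrder (f : ℕ → ℕ) : Prop :=
  Computable f ∧ Monotone f ∧ Tendsto f atTop atTop

/-- The liminf (in the extended reals) of `|(α - a (f s)) / (α - a s)|`. -/
noncomputable def speedLiminf (a : ℕ → ℚ) (f : ℕ → ℕ) (α : ℝ) : EReal :=
  Filter.liminf (fun s => ((|(α - (a (f s) : ℝ)) / (α - (a s : ℝ))| : ℝ) : EReal)) atTop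

/-- A computable approximation `a` of `α` is `ρ`-speedable. -/
def IsRhoSpeedable (a : ℕ → ℚ) (α : ℝ) (ρ : ℚ) : Prop :=
  (∃ q : ℚ, α = (q : ℝ)) ∨
    ∃ f, IsComputableOrder f ∧ speedLiminf a f α ≤ (((ρ : ℝ) : EReal))

/-- A computable approximation is speedable if it is `ρ`-speedable for some rational
`ρ ∈ [0,1)`. -/
def IsSpeedable (a : ℕ → ℚ) (α : ℝ) : Prop :=
  ∃ ρ : ℚ, 0 ≤ ρ ∧ ρ < 1 ∧ IsRhoSpeedable a α ρ

/-- A Solovay test: computable sequences of rationals `l i ≤ r i` in `[0,1]`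
with `Σ (r i - l i) < ∞`. -/
structure SolovayTest where
  l : ℕ → ℚ
  r : ℕ → ℚ
  comp_l : Computable l
  comp_r : Computable r
  mem_l : ∀ i, l i ∈ Set.Icc (0 : ℚ) 1
  mem_r : ∀ i, r i ∈ Set.Icc (0 : ℚ) 1
  le : ∀ i, l i ≤ r i
  summable : Summable (fun i => (r i : ℝ) - (l i : ℝ))

/-- A real `γ` is covered by a Solovay test if `γ ∈ [l i, r i]` for infinitely many `i`. -/
def SolovayTest.Covers (T : SolovayTest) (γ : ℝ) : Prop :=
  ∃ᶠ i in atTop, γ ∈ Set.Icc (T.l i : ℝ) (T.r i : ℝ)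

/-- The sequence of endpoints `l 0, r 0, l 1, r 1, …` of a Solovay test. -/
def SolovayTest.endpoints (T : SolovayTest) (n : ℕ) : ℚ :=
  if n % 2 = 0 then T.l (n / 2) else T.r (n / 2)

theorem comp_find {p : ℕ → ℕ → Bool} (hp : Computable₂ p) (h : ∀ n, ∃ m, p n m = true) :
    ∃ g : ℕ → ℕ, Computable g ∧ ∀ n, p n (g n) = true ∧ ∀ m < g n, p n m = false := by
  classical
  have hpart : Partrec fun n => Nat.rfind (fun m => (p n m : Part Bool)) := Partrec.rfind hp.partrec₂
  refine ⟨fun n => Nat.find (h n), ?_, fun n => ⟨Nat.find_spec (h n), fun m hm => by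
    simpa using Nat.find_min (h n) hm⟩⟩
  refine hpart.of_eq_tot fun n => ?_
  refine Nat.mem_rfind.2 ⟨?_, fun {m} hm => ?_⟩
  · exact Part.mem_some_iff.2 (Nat.find_spec (h n)).symm
  · exact Part.mem_some_iff.2 (by simpa using Nat.find_min (h n) hm)


theorem rat_old_encode (q : ℚ) : @Encodable.encode ℚ Rat.instEncodable q
    = Nat.pair (Encodable.encode q.num) q.den := by
  rfl

theorem int_code_natAbs (z : ℤ) : (Encodable.encode z + 1) / 2 = z.natAbs := by
  cases z with
  | ofNat n => 
    show (2 * n + 1)/2 = n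
    omega
  | negSucc n => 
    show (2 * n + 1 + 1)/2 = n + 1
    omega

def ratRange : Set ℕ := Set.range (@Encodable.encode ℚ Rat.instEncodable)

theorem mem_ratRange (m : ℕ) : m ∈ ratRange ↔ 0 < m.unpair.2 ∧
    ∀ d < m.unpair.2 + 1, ((m.unpair.1 + 1)/2) % d = 0 → m.unpair.2 % d = 0 → d = 1 := by
  constructor
  · rintro ⟨q, rfl⟩
    rw [rat_old_encode]
    simp only [Nat.unpair_pair, int_code_natAbs]
    refine ⟨q.den_pos, fun d _ h1 h2 => ?_⟩
    have := Nat.dvd_gcd (Nat.dvd_of_mod_eq_zero h1) (Nat.dvd_of_mod_eq_zero h2)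
    rw [q.reduced] at this
    simpa using this
  · rintro ⟨h0, h⟩
    set z : ℤ := Denumerable.ofNat ℤ m.unpair.1
    have hz : Encodable.encode z = m.unpair.1 := Denumerable.encode_ofNat _
    refine ⟨⟨z, m.unpair.2, h0.ne', ?_⟩, ?_⟩
    · rw [← hz, int_code_natAbs] at h
      refine h _ (Nat.lt_succ_of_le (Nat.gcd_le_right _ h0)) ?_ ?_
      · exact Nat.mod_eq_zero_of_dvd (Nat.gcd_dvd_left _ _)
      · exact Nat.mod_eq_zero_of_dvd (Nat.gcd_dvd_right _ _)
    · rw [rat_old_encode]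
      simp only [hz, Nat.pair_unpair]

theorem exists_ratE : ∃ E : ℕ → ℕ, Computable E ∧
    ∀ q : ℚ, E (@Encodable.encode ℚ Primcodable.toEncodable q) = @Encodable.encode ℚ Rat.instEncodable q := by
  let : DecidablePred (· ∈ Set.range (@Encodable.encode ℚ Rat.instEncodable)) := @Encodable.decidableRangeEncode ℚ Rat.instEncodable
  let : Infinite (Set.range (@Encodable.encode ℚ Rat.instEncodable)) :=
    Infinite.of_injective _ (Equiv.ofInjective _ (@Encodable.encode_injective ℚ Rat.instEncodable)).injective
  let s := (Set.range (@Encodable.encode ℚ Rat.instEncodable))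
  refine ⟨fun n => (Nat.Subtype.ofNat s n : ℕ), ?_, ?_⟩
  · have hs : PrimrecPred (fun m => m ∈ s) := by
      have h1 : PrimrecRel (fun (d : ℕ) (m : ℕ) => ((m.unpair.1 + 1)/2) % d = 0 → m.unpair.2 % d = 0 → d = 1) := by
        have e1 : PrimrecPred fun x : ℕ × ℕ => ((x.2.unpair.1 + 1)/2) % x.1 = 0 :=
          Primrec.eq.comp (Primrec.nat_mod.comp (Primrec.nat_div.comp (Primrec.succ.comp (Primrec.fst.comp (Primrec.unpair.comp Primrec.snd))) (Primrec.const 2)) Primrec.fst) (Primrec.const 0)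
        have e2 : PrimrecPred fun x : ℕ × ℕ => x.2.unpair.2 % x.1 = 0 :=
          Primrec.eq.comp (Primrec.nat_mod.comp (Primrec.snd.comp (Primrec.unpair.comp Primrec.snd)) Primrec.fst) (Primrec.const 0)
        have e3 : PrimrecPred fun x : ℕ × ℕ => x.1 = 1 :=
          Primrec.eq.comp Primrec.fst (Primrec.const 1)
        refine ((e1.not.or (e2.not.or e3))).of_eq fun x => ?_
        tauto
      have h2 := h1.forall_lt
      have h3 : PrimrecPred (fun m : ℕ => 0 < m.unpair.2) :=
        Primrec.nat_lt.comp (Primrec.const 0) (Primrec.snd.comp Primrec.unpair)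
      have h4 := h3.and (h2.comp (Primrec.succ.comp (Primrec.snd.comp Primrec.unpair)) Primrec.id)
      refine h4.of_eq fun m => ?_
      exact (mem_ratRange m).symm
    have hs2 : PrimrecRel (fun x m : ℕ => x + m + 1 ∈ s) :=
      hs.comp (Primrec.succ.comp (Primrec.nat_add.comp Primrec.fst Primrec.snd))
    have hex : ∀ x, ∃ m, x + m + 1 ∈ s := by
      intro x
      obtain ⟨y, hy, hxy⟩ := (Set.infinite_coe_iff.1 this).exists_gt x
      exact ⟨y - x - 1, by rwa [show x + (y - x - 1) + 1 = y by omega]⟩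
    obtain ⟨g, hg, hg'⟩ := comp_find (p := fun x m => decide (x + m + 1 ∈ s)) (hs2.decide.to_comp) (by simpa using hex)
    have : Computable (fun n : ℕ => (Nat.rec (Nat.Subtype.ofNat s 0 : ℕ) (fun _ x => x + g x + 1) n : ℕ)) := by
      refine Computable.nat_rec (f := fun n : ℕ => n) (g := fun _ => (Nat.Subtype.ofNat s 0 : ℕ)) (h := fun _ p => p.2 + g p.2 + 1) Computable.id (Computable.const _) ?_
      refine Computable.succ.comp (Primrec.nat_add.to_comp.comp (Computable.snd.comp Computable.snd) (hg.comp (Computable.snd.comp Computable.snd)))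
    refine this.of_eq fun n => ?_
    induction n with
    | zero => rfl
    | succ n ih =>
      simp only [ih]
      have : g (Nat.Subtype.ofNat s n : ℕ) = Nat.find (Nat.Subtype.exists_succ (Nat.Subtype.ofNat s n)) := by
        symm
        rw [Nat.find_eq_iff]
        obtain ⟨u, v⟩ := hg' (Nat.Subtype.ofNat s n : ℕ)
        exact ⟨by simpa using u, fun m hm => by simpa using v m hm⟩
      rw [this]
      rfl
  · intro q
    have hq : Denumerable.ofNat ℚ (@Encodable.encode ℚ Primcodable.toEncodable q) = q := Denumerable.ofNat_encode q
    conv_rhs => rw [← hq]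
    generalize @Encodable.encode ℚ Primcodable.toEncodable q = n
    have : Denumerable.ofNat ℚ n = (@Encodable.equivRangeEncode ℚ Rat.instEncodable).symm (Nat.Subtype.ofNat s n) := by
      rfl
    rw [this]
    have := (@Encodable.equivRangeEncode ℚ Rat.instEncodable).apply_symm_apply (Nat.Subtype.ofNat s n)
    exact (congrArg Subtype.val this).symm

theorem comp_natAbs_num : Computable (fun q : ℚ => q.num.natAbs) := by
  obtain ⟨E, hE, h⟩ := exists_ratE
  refine ((Primrec.nat_div.comp (Primrec.succ.comp (Primrec.fst.comp Primrec.unpair)) (Primrec.const 2)).to_comp.comp (hE.comp Computable.encode)).of_eq fun q => ?_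
  simp only [h, rat_old_encode, Nat.unpair_pair]
  exact int_code_natAbs _

theorem comp_den : Computable (fun q : ℚ => q.den) := by
  obtain ⟨E, hE, h⟩ := exists_ratE
  refine ((Primrec.snd.comp Primrec.unpair).to_comp.comp (hE.comp Computable.encode)).of_eq fun q => ?_
  simp only [h, rat_old_encode, Nat.unpair_pair]

theorem rat_eq_natAbs {x : ℚ} (hx : 0 ≤ x) : x = (x.num.natAbs : ℚ) / (x.den : ℚ) := by
  conv_lhs => rw [← Rat.num_div_den x]
  have h : ((x.num.natAbs : ℤ) : ℚ) = (x.num : ℚ) := by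
    rw [Int.natAbs_of_nonneg (Rat.num_nonneg.2 hx)]
  rw [← h]
  simp

def leB (x y : ℚ) : Bool := decide (x.num.natAbs * y.den ≤ y.num.natAbs * x.den)

theorem leB_comp : Computable₂ leB := by
  have n1 : Computable (fun p : ℚ × ℚ => p.1.num.natAbs * p.2.den) :=
    Primrec.nat_mul.to_comp.comp (comp_natAbs_num.comp Computable.fst) (comp_den.comp Computable.snd)
  have n2 : Computable (fun p : ℚ × ℚ => p.2.num.natAbs * p.1.den) :=
    Primrec.nat_mul.to_comp.comp (comp_natAbs_num.comp Computable.snd) (comp_den.comp Computable.fst)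
  exact Primrec.nat_le.decide.to_comp.comp n1 n2

theorem leB_iff {x y : ℚ} (hx : 0 ≤ x) (hy : 0 ≤ y) : leB x y = true ↔ x ≤ y := by
  have h1 : (0 : ℚ) < x.den := by exact_mod_cast x.den_pos
  have h2 : (0 : ℚ) < y.den := by exact_mod_cast y.den_pos
  rw [leB, decide_eq_true_iff]
  conv_rhs => rw [rat_eq_natAbs hx, rat_eq_natAbs hy, div_le_div_iff₀ h1 h2]
  norm_cast

def distN (x y : ℚ) : ℕ := (x.num.natAbs * y.den - y.num.natAbs * x.den) +
  (y.num.natAbs * x.den - x.num.natAbs * y.den)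

theorem distN_comp : Computable₂ distN := by
  have n1 : Computable (fun p : ℚ × ℚ => p.1.num.natAbs * p.2.den) :=
    Primrec.nat_mul.to_comp.comp (comp_natAbs_num.comp Computable.fst) (comp_den.comp Computable.snd)
  have n2 : Computable (fun p : ℚ × ℚ => p.2.num.natAbs * p.1.den) :=
    Primrec.nat_mul.to_comp.comp (comp_natAbs_num.comp Computable.snd) (comp_den.comp Computable.fst)
  exact Primrec.nat_add.to_comp.comp (Primrec.nat_sub.to_comp.comp n1 n2)
    (Primrec.nat_sub.to_comp.comp n2 n1)

theorem nat_absdiff (a b : ℕ) : (((a - b) + (b - a) : ℕ) : ℚ) = |(a : ℚ) - b| := by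
  rcases le_total a b with h | h
  · have h' : (a : ℚ) ≤ b := by exact_mod_cast h
    rw [Nat.sub_eq_zero_of_le h, abs_of_nonpos (by linarith), zero_add, Nat.cast_sub h]; ring
  · have h' : (b : ℚ) ≤ a := by exact_mod_cast h
    rw [Nat.sub_eq_zero_of_le h, abs_of_nonneg (by linarith), add_zero, Nat.cast_sub h]

theorem distN_eq {x y : ℚ} (hx : 0 ≤ x) (hy : 0 ≤ y) :
    (distN x y : ℚ) = |x - y| * (x.den * y.den) := by
  have h1 : (0 : ℚ) < x.den := by exact_mod_cast x.den_pos
  have h2 : (0 : ℚ) < y.den := by exact_mod_cast y.den_pos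
  rw [distN, nat_absdiff]
  have e : x - y = ((x.num.natAbs * y.den : ℕ) - (y.num.natAbs * x.den : ℕ) : ℚ) / (x.den * y.den) := by
    conv_lhs => rw [rat_eq_natAbs hx, rat_eq_natAbs hy]
    push_cast
    field_simp
  conv_rhs => rw [e, abs_div, abs_of_pos (mul_pos h1 h2)]
  rw [div_mul_cancel₀ _ (mul_pos h1 h2).ne']

def exitB (x y z : ℚ) : Bool := decide (distN x y * z.den ≤ 4 * distN y z * x.den)

theorem exitB_iff {x y z : ℚ} (hx : 0 ≤ x) (hy : 0 ≤ y) (hz : 0 ≤ z) :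
    exitB x y z = true ↔ |y - x| ≤ 4 * |z - y| := by
  have h1 : (0 : ℚ) < x.den := by exact_mod_cast x.den_pos
  have h2 : (0 : ℚ) < y.den := by exact_mod_cast y.den_pos
  have h3 : (0 : ℚ) < z.den := by exact_mod_cast z.den_pos
  rw [exitB, decide_eq_true_iff, ← Nat.cast_le (α := ℚ)]
  push_cast
  rw [distN_eq hx hy, distN_eq hy hz, abs_sub_comm x y, abs_sub_comm y z]
  rw [show |y - x| * (x.den * y.den : ℚ) * z.den = |y - x| * (x.den * y.den * z.den) by ring,
    show 4 * (|z - y| * (y.den * z.den : ℚ)) * x.den = 4 * |z - y| * (x.den * y.den * z.den) by ring]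
  exact mul_le_mul_iff_left₀ (by positivity)

theorem exitB_comp {α : Type} [Primcodable α] {x y z : α → ℚ} (hx : Computable x)
    (hy : Computable y) (hz : Computable z) : Computable (fun t => exitB (x t) (y t) (z t)) := by
  have n1 : Computable fun t => distN (x t) (y t) * (z t).den :=
    Primrec.nat_mul.to_comp.comp (distN_comp.comp hx hy) (comp_den.comp hz)
  have n2 : Computable fun t => 4 * distN (y t) (z t) * (x t).den :=
    Primrec.nat_mul.to_comp.comp (Primrec.nat_mul.to_comp.comp (Computable.const 4)
      (distN_comp.comp hy hz)) (comp_den.comp hx)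
  exact Primrec.nat_le.decide.to_comp.comp n1 n2

theorem runsel {B : ℚ → ℚ → Bool} (hB : Computable₂ B) {c : ℕ → ℚ} (hc : Computable c) :
    ∃ M : ℕ → ℚ, Computable M ∧ M 0 = c 0 ∧
      ∀ n, M (n + 1) = cond (B (M n) (c (n + 1))) (c (n + 1)) (M n) := by
  refine ⟨fun n => Nat.rec (c 0) (fun n x => cond (B x (c (n + 1))) (c (n + 1)) x) n, ?_, rfl,
    fun n => rfl⟩
  refine Computable.nat_rec (f := fun n : ℕ => n) (g := fun _ => c 0)
    (h := fun _ p => cond (B p.2 (c (p.1 + 1))) (c (p.1 + 1)) p.2)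
    Computable.id (Computable.const _) ?_
  have h1 : Computable fun p : ℕ × ℕ × ℚ => c (p.2.1 + 1) :=
    hc.comp (Computable.succ.comp (Computable.fst.comp Computable.snd))
  have h2 : Computable fun p : ℕ × ℕ × ℚ => p.2.2 := Computable.snd.comp Computable.snd
  exact Computable.cond (hB.comp h2 h1) h1 h2

theorem lce_of_below {c : ℕ → ℚ} {γ : ℝ} (hc : Computable c) (h01 : ∀ s, c s ∈ Set.Icc (0 : ℚ) 1)
    (hle : ∀ s, (c s : ℝ) ≤ γ) (ht : Tendsto (fun s => (c s : ℝ)) atTop (nhds γ)) :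
    ∃ a : ℕ → ℚ, IsCompApprox a γ ∧ Monotone a := by
  obtain ⟨M, hM, h0, hs⟩ := runsel leB_comp hc
  have key : ∀ n, M n ∈ Set.Icc (0 : ℚ) 1 ∧ (M n : ℝ) ≤ γ ∧ c n ≤ M n := by
    intro n
    induction n with
    | zero => rw [h0]; exact ⟨h01 0, hle 0, le_rfl⟩
    | succ n ih =>
      rw [hs]
      cases hb : leB (M n) (c (n + 1)) with
      | true => exact ⟨h01 _, hle _, le_rfl⟩
      | false =>
        refine ⟨ih.1, ih.2.1, ?_⟩
        have : ¬ M n ≤ c (n + 1) := by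
          rw [← leB_iff ih.1.1 (h01 _).1, hb]; simp
        exact (not_le.1 this).le
  refine ⟨M, ⟨hM, fun s => (key s).1, ?_⟩, monotone_nat_of_le_succ fun n => ?_⟩
  · refine tendsto_of_tendsto_of_tendsto_of_le_of_le ht tendsto_const_nhds (fun s => ?_)
      (fun s => (key s).2.1)
    exact Rat.cast_le.2 (key s).2.2
  · rw [hs]
    cases hb : leB (M n) (c (n + 1)) with
    | true => exact (leB_iff (key n).1.1 (h01 _).1).1 hb
    | false => exact le_rfl

theorem rce_of_above {c : ℕ → ℚ} {γ : ℝ} (hc : Computable c) (h01 : ∀ s, c s ∈ Set.Icc (0 : ℚ) 1)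
    (hle : ∀ s, γ ≤ (c s : ℝ)) (ht : Tendsto (fun s => (c s : ℝ)) atTop (nhds γ)) :
    ∃ a : ℕ → ℚ, IsCompApprox a γ ∧ Antitone a := by
  have hB : Computable₂ (fun x y => leB y x) := leB_comp.comp Computable.snd Computable.fst
  obtain ⟨M, hM, h0, hs⟩ := runsel hB hc
  have key : ∀ n, M n ∈ Set.Icc (0 : ℚ) 1 ∧ γ ≤ (M n : ℝ) ∧ M n ≤ c n := by
    intro n
    induction n with
    | zero => rw [h0]; exact ⟨h01 0, hle 0, le_rfl⟩
    | succ n ih =>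
      rw [hs]
      cases hb : leB (c (n + 1)) (M n) with
      | true => exact ⟨h01 _, hle _, le_rfl⟩
      | false =>
        refine ⟨ih.1, ih.2.1, ?_⟩
        have : ¬ c (n + 1) ≤ M n := by
          rw [← leB_iff (h01 _).1 ih.1.1, hb]; simp
        exact (not_le.1 this).le
  refine ⟨M, ⟨hM, fun s => (key s).1, ?_⟩, antitone_nat_of_succ_le fun n => ?_⟩
  · refine tendsto_of_tendsto_of_tendsto_of_le_of_le tendsto_const_nhds ht
      (fun s => (key s).2.1) (fun s => ?_)
    exact Rat.cast_le.2 (key s).2.2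
  · rw [hs]
    cases hb : leB (c (n + 1)) (M n) with
    | true => exact (leB_iff (h01 _).1 (key n).1.1).1 hb
    | false => exact le_rfl

def Crossing (a : ℕ → ℚ) (γ : ℝ) (r : ℕ) : Prop :=
  ((a r : ℝ) < γ ∧ γ < (a (r + 1) : ℝ)) ∨ (γ < (a r : ℝ) ∧ (a (r + 1) : ℝ) < γ)

theorem exists_crossing {a : ℕ → ℚ} {γ : ℝ} (ha : IsCompApprox a γ) (hne : ∀ s, (a s : ℝ) ≠ γ)
    (hnotlce : ¬ ∃ a : ℕ → ℚ, IsCompApprox a γ ∧ Monotone a)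
    (hnotrce : ¬ ∃ a : ℕ → ℚ, IsCompApprox a γ ∧ Antitone a) (N : ℕ) :
    ∃ r ≥ N, Crossing a γ r := by
  obtain ⟨hc, h01, ht⟩ := ha
  have hsh : ∀ N, Computable (fun s => a (s + N)) := fun N =>
    hc.comp (Primrec.nat_add.to_comp.comp Computable.id (Computable.const N))
  have below : ∀ N, ∃ s ≥ N, (a s : ℝ) < γ := by
    intro N
    by_contra! h
    exact hnotrce (rce_of_above (hsh N) (fun s => h01 _) (fun s => h _ (by omega))
      (ht.comp (tendsto_add_atTop_nat N)))
  have above : ∀ N, ∃ s ≥ N, γ < (a s : ℝ) := by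
    intro N
    by_contra! h
    exact hnotlce (lce_of_below (hsh N) (fun s => h01 _) (fun s => h _ (by omega))
      (ht.comp (tendsto_add_atTop_nat N)))
  obtain ⟨s, hs, hsγ⟩ := below N
  obtain ⟨t, hst, htγ⟩ := above s
  by_contra! h
  have : ∀ k, (a (s + k) : ℝ) < γ := by
    intro k
    induction k with
    | zero => exact hsγ
    | succ k ih =>
      by_contra hk
      exact h (s + k) (by omega) (Or.inl ⟨ih, lt_of_le_of_ne (not_lt.1 hk) (hne _).symm⟩)
  have := this (t - s)
  rw [Nat.add_sub_cancel' hst] at this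
  linarith

theorem core {a : ℕ → ℚ} {γ : ℝ} (ha : IsCompApprox a γ) (hne : ∀ s, (a s : ℝ) ≠ γ)
    (hnotlce : ¬ ∃ a : ℕ → ℚ, IsCompApprox a γ ∧ Monotone a)
    (hnotrce : ¬ ∃ a : ℕ → ℚ, IsCompApprox a γ ∧ Antitone a)
    (NS : ∀ f, IsComputableOrder f →
      ∀ᶠ s in atTop, 9 / 10 * |γ - (a s : ℝ)| < |γ - (a (f s) : ℝ)|) : False := by
  have hcross := exists_crossing ha hne hnotlce hnotrce
  obtain ⟨hc, h01, ht⟩ := ha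
  obtain ⟨s0, hs0⟩ := eventually_atTop.1 (NS (fun s => s + 1)
    ⟨Computable.succ, fun _ _ h => Nat.succ_le_succ h, tendsto_add_atTop_nat 1⟩)
  have gap : ∀ r ≥ s0, 9 * |(a (r + 1) : ℝ) - a r| ≤ 19 * |γ - a (r + 1)| := by
    intro r hr
    have h1 := hs0 r hr
    have h2 : |(a (r + 1) : ℝ) - a r| ≤ |γ - a r| + |γ - a (r + 1)| := by
      have := abs_sub (γ - a r) (γ - a (r + 1))
      simpa using this
    linarith
  have epos : ∀ s, 0 < |γ - (a s : ℝ)| := fun s => abs_pos.2 (sub_ne_zero.2 (hne s).symm)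
  have hexit : ∀ r t, exitB (a r) (a (r + 1)) (a t) = true ↔
      |(a (r + 1) : ℝ) - a r| ≤ 4 * |(a t : ℝ) - a (r + 1)| := by
    intro r t
    rw [exitB_iff (h01 _).1 (h01 _).1 (h01 _).1]
    exact_mod_cast Iff.rfl
  have hex : ∀ r ≥ s0, ∃ t, r + 1 < t ∧ exitB (a r) (a (r + 1)) (a t) = true := by
    intro r hr
    have h1 : ∀ᶠ t in atTop, |(a t : ℝ) - γ| < |γ - a (r + 1)| / 3 := by
      have := Metric.tendsto_nhds.1 ht (|γ - a (r + 1)| / 3) (by have := epos (r+1); linarith)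
      simpa [Real.dist_eq] using this
    obtain ⟨t, h2, h3⟩ := (h1.and (eventually_gt_atTop (r + 1))).exists
    refine ⟨t, h3, (hexit r t).2 ?_⟩
    have h4 := gap r hr
    have h5 : |γ - (a (r + 1) : ℝ)| ≤ |(a t : ℝ) - γ| + |(a t : ℝ) - a (r + 1)| := by
      have := abs_sub ((a t : ℝ) - a (r + 1)) ((a t : ℝ) - γ)
      rw [show (a t : ℝ) - a (r + 1) - (a t - γ) = γ - a (r + 1) by ring] at this
      linarith
    have := epos (r + 1)
    linarith
  obtain ⟨g, hg, hgs⟩ := comp_find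
    (p := fun n t => decide (max n s0 + 1 < t) &&
      exitB (a (max n s0)) (a (max n s0 + 1)) (a t))
    (by
      have m : Computable (fun p : ℕ × ℕ => max p.1 s0) :=
        Primrec.nat_max.to_comp.comp Computable.fst (Computable.const s0)
      have m1 := Computable.succ.comp m
      refine Primrec.and.to_comp.comp ?_ ?_
      · exact Primrec.nat_lt.decide.to_comp.comp m1 Computable.snd
      · exact exitB_comp (hc.comp m) (hc.comp m1) (hc.comp Computable.snd))
    (by
      intro n
      obtain ⟨t, h1, h2⟩ := hex (max n s0) (le_max_right _ _)
      exact ⟨t, by simp only [h2, Bool.and_true, decide_eq_true_iff]; exact h1⟩)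
  have g1 : ∀ n, max n s0 + 1 < g n := fun n => by
    have := (hgs n).1
    rw [Bool.and_eq_true, decide_eq_true_iff] at this
    exact this.1
  have g2 : ∀ n, |(a (max n s0 + 1) : ℝ) - a (max n s0)| ≤
      4 * |(a (g n) : ℝ) - a (max n s0 + 1)| := fun n => by
    have := (hgs n).1
    rw [Bool.and_eq_true] at this
    exact (hexit _ _).1 this.2
  have g3 : ∀ n m, m < g n → max n s0 + 1 < m → 4 * |(a m : ℝ) - a (max n s0 + 1)| <
      |(a (max n s0 + 1) : ℝ) - a (max n s0)| := fun n m h1 h2 => by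
    have := (hgs n).2 m h1
    rw [Bool.and_eq_false_iff] at this
    rcases this with h | h
    · simp only [decide_eq_false_iff_not] at h
      exact absurd h2 h
    · by_contra hh
      rw [(hexit _ _).2 (not_lt.1 hh)] at h
      exact absurd h (by simp)
  clear hgs
  obtain ⟨F, hF, hF0, hFs⟩ : ∃ F : ℕ → ℕ, Computable F ∧ F 0 = 0 ∧
      ∀ n, F (n + 1) = max (F n) (g n) := by
    refine ⟨fun n => Nat.rec 0 (fun n x => max x (g n)) n, ?_, rfl, fun n => rfl⟩
    exact Computable.nat_rec (f := fun n : ℕ => n) (g := fun _ => 0)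
      (h := fun _ p => max p.2 (g p.1)) Computable.id (Computable.const _)
      (Primrec.nat_max.to_comp.comp (Computable.snd.comp Computable.snd)
        (hg.comp (Computable.fst.comp Computable.snd)))
  have Fmono : Monotone F := monotone_nat_of_le_succ fun n => by rw [hFs]; exact le_max_left _ _
  have Fid : ∀ n, n ≤ F n := by
    intro n
    cases n with
    | zero => omega
    | succ n =>
      have h1 := g1 n
      have h2 := le_max_right (F n) (g n)
      have h3 := le_max_left n s0
      rw [hFs]; omega
  obtain ⟨F2, hF2, hF2s⟩ := comp_find (p := fun u s => decide (u ≤ F s))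
    (Primrec.nat_le.decide.to_comp.comp Computable.fst (hF.comp Computable.snd))
    (fun u => ⟨u, by simpa using Fid u⟩)
  have F2a : ∀ u, u ≤ F (F2 u) := fun u => by simpa using (hF2s u).1
  have F2b : ∀ u s, u ≤ F s → F2 u ≤ s := fun u s h => by
    by_contra hh
    have := (hF2s u).2 s (not_le.1 hh)
    simp at this
    omega
  obtain ⟨N1, hN1⟩ := eventually_atTop.1 (NS F ⟨hF, Fmono, tendsto_atTop_mono Fid tendsto_id⟩)
  obtain ⟨N2, hN2⟩ := eventually_atTop.1 (NS F2 ⟨hF2, fun u v h => F2b _ _ (h.trans (F2a v)), by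
    refine tendsto_atTop_atTop.2 fun b => ⟨F b + 1, fun u hu => ?_⟩
    by_contra hh
    have h1 := F2a u
    have h2 := Fmono (not_le.1 hh).le
    omega⟩)
  have step : ∀ r, s0 < r → N1 ≤ r → N2 ≤ r → Crossing a γ r →
      r + 1 < g r ∧ Crossing a γ (g r - 1) := by
    intro r hr hr1 hr2 hcr
    have hgr : ∀ r' < r, g r' ≤ r + 1 := by
      intro r' hr'
      by_contra hh
      have hq1 : s0 ≤ max r' s0 := le_max_right _ _
      have hq2 : max r' s0 < r := max_lt hr' hr
      have k3 := g3 r'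
      generalize max r' s0 = q at *
      have h1 := k3 (r + 1) (by omega) (by omega)
      have h2 : 4 * |(a r : ℝ) - a (q + 1)| < |(a (q + 1) : ℝ) - a q| := by
        rcases Nat.lt_or_ge (q + 1) r with h | h
        · exact k3 r (by omega) h
        · have : r = q + 1 := by omega
          subst this
          have := abs_nonneg ((a (q + 1 + 1) : ℝ) - a (q + 1))
          simp only [sub_self, abs_zero, mul_zero]
          linarith
      have h3 := gap q hq1
      have h4 : 4 * |γ - a (q + 1)| < |(a (q + 1) : ℝ) - a q| := by
        generalize |(a (q + 1) : ℝ) - a q| = L at *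
        have h1' := abs_lt.1 (show |(a (r + 1) : ℝ) - a (q + 1)| < L / 4 by linarith)
        have h2' := abs_lt.1 (show |(a r : ℝ) - a (q + 1)| < L / 4 by linarith)
        have : |γ - a (q + 1)| < L / 4 := by
          rw [abs_lt]
          rcases hcr with ⟨u, v⟩ | ⟨u, v⟩ <;> constructor <;> linarith
        linarith
      have := epos (q + 1)
      linarith
    have hFr : F r ≤ r + 1 := by
      have : ∀ n ≤ r, F n ≤ r + 1 := by
        intro n
        induction n with
        | zero => intro _; omega
        | succ n ih =>
          intro hn
          rw [hFs]
          exact max_le (ih (by omega)) (hgr n (by omega))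
      exact this r le_rfl
    have hm : max r s0 = r := max_eq_left hr.le
    have k1 := g1 r
    have k2 := g2 r
    have k3 := g3 r
    rw [hm] at k1 k2 k3
    have hF1 : F (r + 1) = g r := by rw [hFs]; exact max_eq_right (by omega)
    have hF2r : F2 (g r) = r + 1 := by
      refine le_antisymm (F2b _ _ hF1.ge) ?_
      by_contra hh
      have h1 := F2a (g r)
      have h2 := Fmono (show F2 (g r) ≤ r by omega)
      omega
    have e1 := hN1 (r + 1) (by omega)
    have e2 := hN2 (g r) (by omega)
    rw [hF1] at e1
    rw [hF2r] at e2
    refine ⟨k1, ?_⟩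
    have hgap := gap r hr.le
    have hgt : g r - 1 + 1 = g r := by omega
    have k4 : 4 * |(a (g r - 1) : ℝ) - a (r + 1)| ≤ |(a (r + 1) : ℝ) - a r| := by
      rcases Nat.lt_or_ge (r + 1) (g r - 1) with h | h
      · exact (k3 _ (by omega) h).le
      · have : g r - 1 = r + 1 := by omega
        rw [this]; simp
    unfold Crossing
    rw [hgt]
    have hz := hne (g r)
    generalize (a (g r) : ℝ) = z at *
    generalize (a (g r - 1) : ℝ) = w at *
    rcases hcr with ⟨u, v⟩ | ⟨u, v⟩
    · right
      generalize (a (r + 1) : ℝ) = y at *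
      generalize (a r : ℝ) = x at *
      rw [abs_of_pos (show 0 < y - x by linarith)] at *
      rw [abs_of_neg (show γ - y < 0 by linarith)] at *
      have k4' := abs_le.1 (show |w - y| ≤ (y - x) / 4 by linarith)
      refine ⟨by linarith, ?_⟩
      by_contra hh
      have hz' : γ < z := lt_of_le_of_ne (not_lt.1 hh) (Ne.symm hz)
      rw [abs_of_neg (show γ - z < 0 by linarith)] at *
      rcases abs_cases (z - y) with ⟨h, _⟩ | ⟨h, _⟩ <;> rw [h] at k2 <;> linarith
    · left
      generalize (a (r + 1) : ℝ) = y at *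
      generalize (a r : ℝ) = x at *
      rw [abs_of_neg (show y - x < 0 by linarith)] at *
      rw [abs_of_pos (show 0 < γ - y by linarith)] at *
      have k4' := abs_le.1 (show |w - y| ≤ (x - y) / 4 by linarith)
      refine ⟨by linarith, ?_⟩
      by_contra hh
      have hz' : z < γ := lt_of_le_of_ne (not_lt.1 hh) hz
      rw [abs_of_pos (show 0 < γ - z by linarith)] at *
      rcases abs_cases (z - y) with ⟨h, _⟩ | ⟨h, _⟩ <;> rw [h] at k2 <;> linarith
  obtain ⟨R0, hR0, hcr0⟩ := hcross (s0 + 1 + N1 + N2)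
  obtain ⟨R, hR, hRz, hRs⟩ : ∃ R : ℕ → ℕ, Computable R ∧ R 0 = R0 ∧
      ∀ n, R (n + 1) = g (R n) - 1 := by
    refine ⟨fun n => Nat.rec R0 (fun n x => g x - 1) n, ?_, rfl, fun n => rfl⟩
    exact Computable.nat_rec (f := fun n : ℕ => n) (g := fun _ => R0)
      (h := fun _ p => g p.2 - 1) Computable.id (Computable.const _)
      (Primrec.nat_sub.to_comp.comp (hg.comp (Computable.snd.comp Computable.snd))
        (Computable.const 1))
  have hRc : ∀ n, R0 + n ≤ R n ∧ Crossing a γ (R n) := by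
    intro n
    induction n with
    | zero => rw [hRz]; exact ⟨le_rfl, hcr0⟩
    | succ n ih =>
      obtain ⟨h1, h2⟩ := step (R n) (by omega) (by omega) (by omega) ih.2
      rw [hRs]
      exact ⟨by omega, h2⟩
  have hRt : Tendsto R atTop atTop :=
    tendsto_atTop_mono (fun n => (show n ≤ R n by have := (hRc n).1; omega)) tendsto_id
  have cR := hc.comp hR
  have cR1 := hc.comp (Computable.succ.comp hR)
  have cmin : ∀ j, cond (leB (a (R j)) (a (R j + 1))) (a (R j)) (a (R j + 1)) =
      min (a (R j)) (a (R j + 1)) := by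
    intro j
    cases hb : leB (a (R j)) (a (R j + 1)) with
    | true => exact (min_eq_left ((leB_iff (h01 _).1 (h01 _).1).1 hb)).symm
    | false =>
      refine (min_eq_right (not_le.1 fun h => ?_).le).symm
      rw [(leB_iff (h01 _).1 (h01 _).1).2 h] at hb
      exact absurd hb (by simp)
  have ccomp : Computable (fun j => min (a (R j)) (a (R j + 1))) :=
    (Computable.cond (leB_comp.comp cR cR1) cR cR1).of_eq cmin
  refine hnotlce (lce_of_below ccomp (fun j => ⟨le_min (h01 _).1 (h01 _).1,
    (min_le_left _ _).trans (h01 _).2⟩) (fun j => ?_) ?_)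
  · rw [Rat.cast_min]
    rcases (hRc j).2 with ⟨u, v⟩ | ⟨u, v⟩
    · exact (min_le_left _ _).trans u.le
    · exact (min_le_right _ _).trans v.le
  · have t1 := ht.comp hRt
    have t2 := ht.comp ((tendsto_add_atTop_nat 1).comp hRt)
    have := t1.min t2
    rw [min_self] at this
    refine this.congr fun j => ?_
    simp [Rat.cast_min]

theorem dce_not_lce_not_rce_fully_speedable (γ : ℝ) (hγ : γ ∈ Set.Ioo (0 : ℝ) 1)
    (hdce : ∃ a : ℕ → ℚ, IsDCEApprox a γ)
    (hnotlce : ¬ ∃ a : ℕ → ℚ, IsCompApprox a γ ∧ Monotone a)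
    (hnotrce : ¬ ∃ a : ℕ → ℚ, IsCompApprox a γ ∧ Antitone a) :
    ∀ a : ℕ → ℚ, IsDCEApprox a γ → IsSpeedable a γ := by

  intro a ha
  by_contra hns
  have hr : ¬ IsRhoSpeedable a γ (9 / 10) := fun h => hns ⟨9 / 10, by norm_num, by norm_num, h⟩
  unfold IsRhoSpeedable at hr
  push Not at hr
  obtain ⟨hirr, hf⟩ := hr
  have hne : ∀ s, (a s : ℝ) ≠ γ := fun s h => hirr (a s) h.symm
  refine core ha.1 hne hnotlce hnotrce fun f hfo => ?_
  have h1 := eventually_lt_of_lt_liminf (hf f hfo)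
  filter_upwards [h1] with s hs
  rw [EReal.coe_lt_coe_iff, abs_div, lt_div_iff₀ (abs_pos.2 (sub_ne_zero.2 (hne s).symm))] at hs
  norm_num at hs ⊢
  linarith
end

section
/- Every computably approximable real has a two-sided computable approximation: if a real α ∈ (0,1) has a computable approximation, then it has a computable approximation {a_s} with a_s < α for infinitely many s and a_s > α for infinitely many s. -/
open Filter

namespace TwoSided

def inS (n : ℕ) : Prop := 0 < n.unpair.2 ∧ Nat.Coprime ((n.unpair.1 + 1) / 2) n.unpair.2

instance : DecidablePred inS := fun n => by unfold inS; infer_instance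

def e0 (q : ℚ) : ℕ := @Encodable.encode ℚ Rat.instEncodable q

theorem e0_eq (q : ℚ) : e0 q = Nat.pair (Encodable.encode q.num) q.den := by
  rfl

theorem natAbs_enc (z : ℤ) : (Encodable.encode z + 1) / 2 = z.natAbs := by
  cases z with
  | ofNat n =>
    change (2 * n + 1) / 2 = n
    omega
  | negSucc n =>
    change (2 * n + 1 + 1) / 2 = n + 1
    omega

theorem enc_mod (z : ℤ) : (Encodable.encode z) % 2 = 0 ↔ 0 ≤ z := by
  cases z with
  | ofNat n =>
    change (2 * n) % 2 = 0 ↔ _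
    simp
  | negSucc n =>
    change (2 * n + 1) % 2 = 0 ↔ _
    have : ¬ (0 ≤ Int.negSucc n) := by simp
    simp [this]

theorem mem_range (n : ℕ) : n ∈ Set.range e0 ↔ inS n := by
  constructor
  · rintro ⟨q, rfl⟩
    rw [e0_eq, inS]
    simp only [Nat.unpair_pair, natAbs_enc]
    exact ⟨q.pos, q.reduced⟩
  · rintro ⟨h1, h2⟩
    obtain ⟨z, hz⟩ : ∃ z : ℤ, Encodable.encode z = n.unpair.1 :=
      ⟨Denumerable.ofNat ℤ n.unpair.1, Denumerable.encode_ofNat _⟩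
    rw [← hz, natAbs_enc] at h2
    refine ⟨⟨z, n.unpair.2, h1.ne', h2⟩, ?_⟩
    rw [e0_eq]
    simp [hz]

def g (n : ℕ) : ℕ := e0 (Denumerable.ofNat ℚ n)

theorem g_spec (n : ℕ) : inS (g (n+1)) ∧ g n < g (n+1) ∧ ∀ m, inS m → g n < m → g (n+1) ≤ m := by
  refine ⟨(mem_range _).1 ⟨_, rfl⟩, ?_⟩
  let := @Encodable.decidableRangeEncode ℚ Rat.instEncodable
  let : Infinite (Set.range (@Encodable.encode ℚ Rat.instEncodable)) :=
    Infinite.of_injective _ (Equiv.ofInjective _ Encodable.encode_injective).injective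
  have key : ∀ n, g n = (Nat.Subtype.ofNat (Set.range (@Encodable.encode ℚ Rat.instEncodable)) n : ℕ) := by
    intro n
    have : Denumerable.ofNat ℚ n = (@Encodable.equivRangeEncode ℚ Rat.instEncodable).symm (Nat.Subtype.ofNat (Set.range (@Encodable.encode ℚ Rat.instEncodable)) n) := rfl
    rw [g, this, e0]
    have := (@Encodable.equivRangeEncode ℚ Rat.instEncodable).apply_symm_apply (Nat.Subtype.ofNat (Set.range (@Encodable.encode ℚ Rat.instEncodable)) n)
    exact congrArg Subtype.val this
  rw [key, key]
  refine ⟨Nat.Subtype.lt_succ_self _, fun m hm h => ?_⟩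
  have hm' : m ∈ Set.range (@Encodable.encode ℚ Rat.instEncodable) := (mem_range m).2 hm
  exact Nat.Subtype.succ_le_of_lt (x := ⟨m, hm'⟩) h

theorem inS_prim : PrimrecPred inS := by
  have u1 : Primrec (fun n : ℕ => n.unpair.1) := Primrec.fst.comp Primrec.unpair
  have u2 : Primrec (fun n : ℕ => n.unpair.2) := Primrec.snd.comp Primrec.unpair
  have u3 : Primrec (fun n : ℕ => (n.unpair.1 + 1) / 2) :=
    Primrec.nat_div.comp (Primrec.succ.comp u1) (Primrec.const 2)
  have hR : PrimrecRel (fun (x : ℕ) (y : ℕ) =>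
      x ≤ 1 ∨ ¬ (((y.unpair.1 + 1) / 2) % x = 0 ∧ y.unpair.2 % x = 0)) := by
    refine PrimrecPred.primrecRel (p := fun z : ℕ × ℕ =>
      z.1 ≤ 1 ∨ ¬ (((z.2.unpair.1 + 1) / 2) % z.1 = 0 ∧ z.2.unpair.2 % z.1 = 0)) ?_
    refine PrimrecPred.or ?_ (PrimrecPred.not (PrimrecPred.and ?_ ?_))
    · exact Primrec.nat_le.comp Primrec.fst (Primrec.const 1)
    · exact Primrec.eq.comp (Primrec.nat_mod.comp (u3.comp Primrec.snd) Primrec.fst)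
        (Primrec.const 0)
    · exact Primrec.eq.comp (Primrec.nat_mod.comp (u2.comp Primrec.snd) Primrec.fst)
        (Primrec.const 0)
  have h2 := hR.forall_lt
  have h3 := PrimrecRel.comp h2 (Primrec.succ.comp u2) Primrec.id
  refine PrimrecPred.of_eq (PrimrecPred.and (Primrec.nat_lt.comp (Primrec.const 0) u2) h3) ?_
  intro n
  unfold inS
  refine and_congr_right fun hpos => ?_
  simp only [Nat.succ_eq_add_one, id]
  constructor
  · intro h
    by_contra hc
    have hd1 := Nat.gcd_dvd_left ((n.unpair.1 + 1) / 2) n.unpair.2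
    have hd2 := Nat.gcd_dvd_right ((n.unpair.1 + 1) / 2) n.unpair.2
    have hp := Nat.gcd_pos_of_pos_right ((n.unpair.1 + 1) / 2) hpos
    rcases h _ (Nat.lt_succ_of_le (Nat.le_of_dvd hpos hd2)) with h | h
    · exact hc (show Nat.gcd _ _ = 1 by omega)
    · exact h ⟨Nat.mod_eq_zero_of_dvd hd1, Nat.mod_eq_zero_of_dvd hd2⟩
  · intro h x hx
    by_contra hc
    push Not at hc
    have := Nat.dvd_gcd (Nat.dvd_of_mod_eq_zero hc.2.1) (Nat.dvd_of_mod_eq_zero hc.2.2)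
    rw [show Nat.gcd _ _ = 1 from h] at this
    have := Nat.le_of_dvd one_pos this
    omega

/-- unbounded search with a total result -/
theorem comp_search {A : Type*} [Primcodable A] {p : A → ℕ → Prop} [∀ a n, Decidable (p a n)]
    (hp : Computable₂ (fun a n => decide (p a n))) {f : A → ℕ} (hf : ∀ a, p a (f a))
    (hm : ∀ a m, p a m → f a ≤ m) : Computable f := by
  refine Partrec.of_eq_tot (Partrec.rfind hp.partrec₂) fun a => ?_
  rw [Nat.mem_rfind]
  refine ⟨by simpa using hf a, fun {m} h => ?_⟩
  have : ¬ p a m := fun h' => absurd (hm a m h') (by omega)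
  simpa using this

theorem g_comp : Computable g := by
  have ex : ∀ x, ∃ m, inS m ∧ x < m := by
    intro x
    refine ⟨g (x+1), (g_spec x).1, ?_⟩
    have : StrictMono g := strictMono_nat_of_lt_succ fun n => (g_spec n).2.1
    have := this.id_le (x+1)
    simp at this; omega
  have hnext : Computable (fun x => Nat.find (ex x)) := by
    refine comp_search (p := fun x m => inS m ∧ x < m) ?_ (fun a => Nat.find_spec (ex a))
      (fun a m h => Nat.find_min' _ h)
    have : PrimrecPred (fun z : ℕ × ℕ => inS z.2 ∧ z.1 < z.2) :=
      (inS_prim.comp Primrec.snd).and (Primrec.nat_lt.comp Primrec.fst Primrec.snd)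
    exact this.decide.to_comp
  have := Computable.nat_rec (f := fun n : ℕ => n) (g := fun _ => g 0) (h := fun _ z => Nat.find (ex z.2))
    Computable.id (Computable.const _) ((hnext.comp (Computable.snd.comp Computable.snd)).to₂)
  refine this.of_eq fun n => ?_
  induction n with
  | zero => rfl
  | succ n ih =>
    simp only at ih ⊢
    rw [ih]
    obtain ⟨h1, h2, h3⟩ := g_spec n
    refine le_antisymm (Nat.find_min' _ ⟨h1, h2⟩) ?_
    have := Nat.find_spec (ex (g n))
    exact h3 _ this.1 this.2

theorem e0_comp : Computable e0 := by
  refine (g_comp.comp (Computable.encode (α := ℚ))).of_eq fun q => ?_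
  rw [g]; congr 1; exact Denumerable.ofNat_encode q

def N (q : ℚ) : ℕ := q.num.natAbs

theorem N_comp : Computable N := by
  have u1 : Primrec (fun n : ℕ => (n.unpair.1 + 1) / 2) := 
    Primrec.nat_div.comp (Primrec.succ.comp (Primrec.fst.comp Primrec.unpair)) (Primrec.const 2)
  refine (u1.to_comp.comp e0_comp).of_eq fun q => ?_
  rw [e0_eq]; simp [natAbs_enc, N]

theorem den_comp : Computable Rat.den := by
  have u1 : Primrec (fun n : ℕ => n.unpair.2) := Primrec.snd.comp Primrec.unpair
  refine (u1.to_comp.comp e0_comp).of_eq fun q => ?_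
  rw [e0_eq]; simp

def nn (q : ℚ) : ℕ := (e0 q).unpair.1 % 2

theorem nn_comp : Computable nn := by
  have u1 : Primrec (fun n : ℕ => n.unpair.1 % 2) := 
    Primrec.nat_mod.comp (Primrec.fst.comp Primrec.unpair) (Primrec.const 2)
  exact u1.to_comp.comp e0_comp

theorem nn_iff (q : ℚ) : nn q = 0 ↔ 0 ≤ q := by
  rw [nn, e0_eq]; simp [enc_mod]

theorem eq_N (q : ℚ) (h : 0 ≤ q) : q = (N q : ℚ) / q.den := by
  conv_lhs => rw [← Rat.num_div_den q]
  congr 1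
  have : ((N q : ℤ)) = q.num := by simp [N, Rat.num_nonneg.2 h]
  exact_mod_cast this.symm

theorem char_eq (q : ℚ) (a b : ℕ) :
    (nn q = 0 ∧ N q * (b+1) = a * q.den) ↔ q = (a : ℚ) / (b + 1 : ℕ) := by
  have hd : (q.den : ℚ) ≠ 0 := by exact_mod_cast q.den_nz
  have hb : ((b + 1 : ℕ) : ℚ) ≠ 0 := by positivity
  constructor
  · rintro ⟨h0, h1⟩
    rw [nn_iff] at h0
    rw [eq_N q h0, div_eq_div_iff hd hb]
    exact_mod_cast h1
  · intro h
    have h0 : 0 ≤ q := by rw [h]; positivity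
    refine ⟨(nn_iff q).2 h0, ?_⟩
    rw [eq_N q h0, div_eq_div_iff hd hb] at h
    exact_mod_cast h

theorem div_comp : Computable₂ (fun a b : ℕ => (a : ℚ) / (b + 1 : ℕ)) := by
  refine (Computable.encode_iff (f := fun z : ℕ × ℕ => (z.1 : ℚ) / (z.2 + 1 : ℕ))).1 ?_
  refine comp_search (p := fun z n => nn (Denumerable.ofNat ℚ n) = 0 ∧ 
    N (Denumerable.ofNat ℚ n) * (z.2 + 1) = z.1 * (Denumerable.ofNat ℚ n).den) ?_ ?_ ?_
  · have hp : PrimrecPred (fun w : (ℕ × ℕ) × (ℕ × ℕ × ℕ) => w.2.1 = 0 ∧ w.2.2.1 * (w.1.2 + 1) = w.1.1 * w.2.2.2) := by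
      have s2 : Primrec (fun w : (ℕ × ℕ) × (ℕ × ℕ × ℕ) => w.2.2) := Primrec.snd.comp Primrec.snd
      refine PrimrecPred.and (Primrec.eq.comp (Primrec.fst.comp Primrec.snd) (Primrec.const 0)) ?_
      refine Primrec.eq.comp (Primrec.nat_mul.comp (Primrec.fst.comp s2) (Primrec.succ.comp (Primrec.snd.comp Primrec.fst))) 
        (Primrec.nat_mul.comp (Primrec.fst.comp Primrec.fst) (Primrec.snd.comp s2))
    have on : Computable (fun z : (ℕ × ℕ) × ℕ => Denumerable.ofNat ℚ z.2) :=
      (Computable.ofNat ℚ).comp Computable.snd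
    have := hp.decide.to_comp.comp (Computable.pair (Computable.fst (α := ℕ × ℕ) (β := ℕ)) 
      (Computable.pair (nn_comp.comp on) (Computable.pair (N_comp.comp on) (den_comp.comp on))))
    exact this
  · rintro ⟨a, b⟩
    rw [char_eq]
    exact Denumerable.ofNat_encode _
  · rintro ⟨a, b⟩ m h
    rw [char_eq] at h
    rw [← h]
    exact (Denumerable.encode_ofNat m).le

def v (a : ℕ → ℚ) (k s : ℕ) : ℕ := N (a s) * (k + 1) / (a s).den

def M (a : ℕ → ℚ) (k t : ℕ) : ℕ :=
  Nat.rec 0 (fun u m => max m (v a k (k + u) + 1)) t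

def outP (a : ℕ → ℚ) (k s : ℕ) : ℕ := N (a s) * (k + 1) + 2 * (a s).den
def outQ (a : ℕ → ℚ) (k s : ℕ) : ℕ := (a s).den * (k + 1)

def out (a : ℕ → ℚ) (k s : ℕ) : ℚ :=
  ((min (outP a k s) (outQ a k s) : ℕ) : ℚ) / ((outQ a k s - 1) + 1 : ℕ)

def b (a : ℕ → ℚ) (n : ℕ) : ℚ :=
  bif decide (M a n.unpair.1 n.unpair.2 ≤ v a n.unpair.1 (n.unpair.1 + n.unpair.2)) then
    out a n.unpair.1 (n.unpair.1 + n.unpair.2) else a n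

section comp
variable {A : Type*} [Primcodable A] {f g h : A → ℕ} {a : ℕ → ℚ}

theorem c_add (hf : Computable f) (hg : Computable g) : Computable fun x => f x + g x :=
  (Primrec.nat_add.to_comp).comp hf hg
theorem c_mul (hf : Computable f) (hg : Computable g) : Computable fun x => f x * g x :=
  (Primrec.nat_mul.to_comp).comp hf hg
theorem c_sub (hf : Computable f) (hg : Computable g) : Computable fun x => f x - g x :=
  (Primrec.nat_sub.to_comp).comp hf hg
theorem c_div (hf : Computable f) (hg : Computable g) : Computable fun x => f x / g x :=
  (Primrec.nat_div.to_comp).comp hf hg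
theorem c_max (hf : Computable f) (hg : Computable g) : Computable fun x => max (f x) (g x) :=
  (Primrec.nat_max.to_comp).comp hf hg
theorem c_min (hf : Computable f) (hg : Computable g) : Computable fun x => min (f x) (g x) :=
  (Primrec.nat_min.to_comp).comp hf hg

theorem c_v (ha : Computable a) (hf : Computable f) (hg : Computable g) :
    Computable fun x => v a (f x) (g x) :=
  c_div (c_mul (N_comp.comp (ha.comp hg)) (c_add hf (Computable.const 1))) (den_comp.comp (ha.comp hg))

theorem c_M (ha : Computable a) (hf : Computable f) (hg : Computable g) :
    Computable fun x => M a (f x) (g x) := by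
  refine Computable.nat_rec (h := fun x z => max z.2 (v a (f x) (f x + z.1) + 1)) hg (Computable.const 0) ?_
  have h1 : Computable fun w : A × ℕ × ℕ => f w.1 := hf.comp Computable.fst
  have h2 : Computable fun w : A × ℕ × ℕ => w.2.1 := Computable.fst.comp Computable.snd
  have h3 : Computable fun w : A × ℕ × ℕ => w.2.2 := Computable.snd.comp Computable.snd
  exact c_max h3 (c_add (c_v ha h1 (c_add h1 h2)) (Computable.const 1))

theorem c_out (ha : Computable a) (hf : Computable f) (hg : Computable g) :
    Computable fun x => out a (f x) (g x) := by
  have hd := den_comp.comp (ha.comp hg)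
  have hk := c_add hf (Computable.const 1)
  have hP : Computable fun x => outP a (f x) (g x) :=
    c_add (c_mul (N_comp.comp (ha.comp hg)) hk) (c_mul (Computable.const 2) hd)
  have hQ : Computable fun x => outQ a (f x) (g x) := c_mul hd hk
  exact div_comp.comp (c_min hP hQ) (c_sub hQ (Computable.const 1))

theorem c_b (ha : Computable a) : Computable (b a) := by
  have h1 : Computable fun n : ℕ => n.unpair.1 := Computable.fst.comp Computable.unpair
  have h2 : Computable fun n : ℕ => n.unpair.2 := Computable.snd.comp Computable.unpair
  have h3 := c_add h1 h2
  refine Computable.cond ?_ (c_out ha h1 h3) ha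
  exact (Primrec.nat_le.decide.to_comp).comp (c_M ha h1 h2) (c_v ha h1 h3)

theorem c_oneSub (ha : Computable a) (h01 : ∀ s, a s ∈ Set.Icc (0 : ℚ) 1) :
    Computable fun s => 1 - a s := by
  have hd := den_comp.comp ha
  refine (div_comp.comp (c_sub hd (N_comp.comp ha)) (c_sub hd (Computable.const 1))).of_eq fun s => ?_
  have h := eq_N (a s) (h01 s).1
  have hp := (a s).pos
  have hp' : (0 : ℚ) < (a s).den := by exact_mod_cast hp
  have hle : N (a s) ≤ (a s).den := by
    have := (h01 s).2
    rw [h, div_le_one hp'] at this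
    exact_mod_cast this
  rw [Nat.sub_add_cancel hp, Nat.cast_sub hle]
  conv_rhs => rw [h]
  field_simp
end comp

theorem out_eq (a : ℕ → ℚ) (k s : ℕ) (h : 0 ≤ a s) : out a k s = min (a s + 2 / (k + 1)) 1 := by
  have hq : 0 < outQ a k s := Nat.mul_pos (a s).pos (Nat.succ_pos k)
  have hd : (0 : ℚ) < (a s).den := by exact_mod_cast (a s).pos
  have hq' : (0 : ℚ) < outQ a k s := by exact_mod_cast hq
  rw [out, Nat.sub_add_cancel hq, Nat.cast_min, ← min_div_div_right hq'.le, div_self hq'.ne']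
  congr 1
  conv_rhs => rw [eq_N _ h]
  simp only [outP, outQ]
  push_cast
  field_simp

theorem v_spec (a : ℕ → ℚ) (k s : ℕ) (h : 0 ≤ a s) :
    (v a k s : ℚ) ≤ a s * (k + 1) ∧ a s * (k + 1) < v a k s + 1 := by
  have hp := (a s).pos
  have hd : (0 : ℚ) < (a s).den := by exact_mod_cast hp
  have e : a s * (k + 1) = ((N (a s) * (k + 1) : ℕ) : ℚ) / (a s).den := by
    conv_lhs => rw [eq_N _ h]
    push_cast
    field_simp
  rw [e, le_div_iff₀ hd, div_lt_iff₀ hd, v]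
  constructor
  · exact_mod_cast Nat.div_mul_le_self _ _
  · exact_mod_cast Nat.lt_mul_of_div_lt (Nat.lt_succ_self _) hp

theorem v_le (a : ℕ → ℚ) (k s : ℕ) (h : a s ∈ Set.Icc (0 : ℚ) 1) : v a k s ≤ k + 1 := by
  have := (v_spec a k s h.1).1
  have h2 : a s * (k + 1) ≤ 1 * (k + 1) := mul_le_mul_of_nonneg_right h.2 (by positivity)
  have h3 : (v a k s : ℚ) ≤ ((k + 1 : ℕ) : ℚ) := by push_cast; linarith
  exact_mod_cast h3

theorem M_le (a : ℕ → ℚ) (k t x : ℕ) : M a k t ≤ x ↔ ∀ u < t, v a k (k + u) < x := by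
  induction t with
  | zero => simp [M]
  | succ t ih =>
    have : M a k (t+1) = max (M a k t) (v a k (k + t) + 1) := rfl
    rw [this, max_le_iff, ih]
    constructor
    · rintro ⟨h1, h2⟩ u hu
      rcases Nat.lt_succ_iff_lt_or_eq.1 hu with h | rfl
      · exact h1 u h
      · omega
    · intro h
      exact ⟨fun u hu => h u (by omega), h t (by omega)⟩

def isRef (a : ℕ → ℚ) (k t : ℕ) : Prop := M a k t ≤ v a k (k + t)

theorem b_ref {a : ℕ → ℚ} {n : ℕ} (h : isRef a n.unpair.1 n.unpair.2) :
    b a n = out a n.unpair.1 (n.unpair.1 + n.unpair.2) := by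
  unfold isRef at h
  simp [b, h]

theorem b_nref {a : ℕ → ℚ} {n : ℕ} (h : ¬ isRef a n.unpair.1 n.unpair.2) :
    b a n = a n := by
  unfold isRef at h
  simp [b, h]

theorem ref_inj {a : ℕ → ℚ} {k t u : ℕ} (ht : isRef a k t) (hu : isRef a k u)
    (h : v a k (k + t) = v a k (k + u)) : t = u := by
  rcases lt_trichotomy t u with h1 | h1 | h1
  · have := (M_le a k u _).1 hu t h1
    omega
  · exact h1
  · have := (M_le a k t _).1 ht u h1
    omega

theorem ref_fin (a : ℕ → ℚ) (h01 : ∀ s, a s ∈ Set.Icc (0 : ℚ) 1) (K : ℕ) :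
    {n : ℕ | isRef a n.unpair.1 n.unpair.2 ∧ n.unpair.1 < K}.Finite := by
  refine Set.Finite.of_injOn (f := fun n => (n.unpair.1, v a n.unpair.1 (n.unpair.1 + n.unpair.2)))
    (t := Set.Iio K ×ˢ Set.Iic (K + 1)) ?_ ?_ ((Set.finite_Iio K).prod (Set.finite_Iic (K+1)))
  · rintro n ⟨h1, h2⟩
    refine ⟨h2, ?_⟩
    have := v_le a n.unpair.1 (n.unpair.1 + n.unpair.2) (h01 _)
    simp only [Set.mem_Iic]
    omega
  · rintro n ⟨h1, h2⟩ m ⟨h3, h4⟩ h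
    simp only [Prod.mk.injEq] at h
    obtain ⟨e1, e2⟩ := h
    rw [← e1] at e2 h3
    have e3 := ref_inj h1 h3 e2
    rw [← Nat.pair_unpair n, ← Nat.pair_unpair m, e1, e3]

theorem ref_last (a : ℕ → ℚ) (h01 : ∀ s, a s ∈ Set.Icc (0 : ℚ) 1) (k : ℕ) :
    ∃ t, isRef a k t ∧ ∀ u, v a k (k + u) ≤ v a k (k + t) := by
  classical
  have hfin : (Set.range fun u => v a k (k + u)).Finite :=
    (Set.finite_Iic (k+1)).subset (by rintro _ ⟨u, rfl⟩; exact v_le a k _ (h01 _))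
  obtain ⟨_, ⟨t0, rfl⟩, hx⟩ := hfin.exists_maximal ⟨_, ⟨0, rfl⟩⟩
  have hx : ∀ u, v a k (k + u) ≤ v a k (k + t0) := fun u => by
    by_contra hc
    exact hc (hx ⟨u, rfl⟩ (by simp only; omega))
  have ex : ∃ t, v a k (k + t) = v a k (k + t0) := ⟨t0, rfl⟩
  refine ⟨Nat.find ex, ?_, fun u => (hx u).trans (Nat.find_spec ex).ge⟩
  rw [isRef, M_le]
  intro u hu
  have h1 := Nat.find_min ex hu
  have h2 := hx u
  have h3 := Nat.find_spec ex
  omega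

theorem up {a : ℕ → ℚ} {α : ℝ} (hα : α < 1) (h : IsCompApprox a α) :
    IsCompApprox (b a) α ∧ ∃ᶠ s in atTop, α < (b a s : ℝ) := by
  obtain ⟨hc, h01, hl⟩ := h
  have hout : ∀ k s, ((out a k s : ℚ) : ℝ) = min ((a s : ℝ) + 2 / (k + 1)) 1 := by
    intro k s
    rw [out_eq a k s (h01 s).1]
    push_cast
    rfl
  refine ⟨⟨c_b hc, ?_, ?_⟩, ?_⟩
  · intro n
    by_cases hr : isRef a n.unpair.1 n.unpair.2
    · rw [b_ref hr, out_eq _ _ _ (h01 _).1]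
      refine ⟨le_min ?_ zero_le_one, min_le_right _ _⟩
      have := (h01 (n.unpair.1 + n.unpair.2)).1
      positivity
    · rw [b_nref hr]; exact h01 n
  · rw [Metric.tendsto_atTop] at hl ⊢
    intro ε hε
    obtain ⟨K1, hK1⟩ := hl (ε / 2) (by linarith)
    obtain ⟨K2, hK2⟩ := exists_nat_gt (4 / ε)
    obtain ⟨B, hB⟩ := (ref_fin a h01 (max K1 K2)).bddAbove
    refine ⟨max (B + 1) K1, fun n hn => ?_⟩
    by_cases hr : isRef a n.unpair.1 n.unpair.2
    · have hk : max K1 K2 ≤ n.unpair.1 := by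
        by_contra hk
        have := hB ⟨hr, not_le.1 hk⟩
        have := le_of_max_le_left hn
        omega
      rw [b_ref hr, hout, Real.dist_eq]
      have h1 := hK1 (n.unpair.1 + n.unpair.2) (by have := le_of_max_le_left hk; omega)
      rw [Real.dist_eq] at h1
      have h2 : (2 : ℝ) / (n.unpair.1 + 1) < ε / 2 := by
        have h3 : (K2 : ℝ) ≤ n.unpair.1 := by exact_mod_cast le_of_max_le_right hk
        rw [div_lt_iff₀ hε] at hK2
        rw [div_lt_iff₀ (by positivity)]
        nlinarith
      have h4 : (0 : ℝ) < 2 / (n.unpair.1 + 1) := by positivity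
      rw [abs_lt] at h1 ⊢
      rcases min_cases ((a (n.unpair.1 + n.unpair.2) : ℝ) + 2 / (n.unpair.1 + 1)) 1 with ⟨e, h⟩ | ⟨e, h⟩ <;>
        rw [e] <;> constructor <;> linarith
    · rw [b_nref hr]
      have := hK1 n (le_of_max_le_right hn)
      linarith
  · rw [frequently_atTop]
    intro k
    obtain ⟨t, ht, hmax⟩ := ref_last a h01 k
    refine ⟨Nat.pair k t, Nat.left_le_pair k t, ?_⟩
    have hb := b_ref (a := a) (n := Nat.pair k t) (by simpa using ht)
    rw [hb, hout]
    simp only [Nat.unpair_pair]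
    refine lt_min ?_ hα
    have hle : α ≤ (a (k + t) : ℝ) + 1 / (k + 1) := by
      refine le_of_tendsto hl (eventually_atTop.2 ⟨k, fun s hs => ?_⟩)
      obtain ⟨u, rfl⟩ := Nat.exists_eq_add_of_le hs
      have h1 := (v_spec a k (k + u) (h01 _).1).2
      have h2 := (v_spec a k (k + t) (h01 _).1).1
      have h3 : (v a k (k + u) : ℚ) ≤ v a k (k + t) := by exact_mod_cast hmax u
      have h4 : a (k + u) ≤ a (k + t) + 1 / (k + 1) := by
        have hk : (0 : ℚ) < k + 1 := by positivity
        have : (a (k + t) + 1 / (k + 1)) * (k + 1) = a (k + t) * (k + 1) + 1 := by field_simp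
        refine le_of_mul_le_mul_right ?_ hk
        linarith
      have h5 : ((a (k + u) : ℚ) : ℝ) ≤ ((a (k + t) + 1 / (k + 1) : ℚ) : ℝ) := Rat.cast_le.2 h4
      push_cast at h5
      exact h5
    have : (1 : ℝ) / (k + 1) < 2 / (k + 1) := by gcongr; norm_num
    linarith

theorem oneSub {a : ℕ → ℚ} {α : ℝ} (h : IsCompApprox a α) :
    IsCompApprox (fun s => 1 - a s) (1 - α) := by
  obtain ⟨hc, h01, hl⟩ := h
  refine ⟨c_oneSub hc h01, fun s => ⟨by have := (h01 s).2; linarith, by have := (h01 s).1; linarith⟩, ?_⟩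
  push_cast
  exact hl.const_sub 1

def il (x y : ℕ → ℚ) (n : ℕ) : ℚ := bif n.bodd then x n.div2 else y n.div2

theorem il_approx {x y : ℕ → ℚ} {α : ℝ} (hx : IsCompApprox x α) (hy : IsCompApprox y α) :
    IsCompApprox (il x y) α := by
  obtain ⟨hc, h01, hl⟩ := hx
  obtain ⟨hc', h01', hl'⟩ := hy
  refine ⟨Computable.cond Computable.nat_bodd (hc.comp Computable.nat_div2) (hc'.comp Computable.nat_div2), ?_, ?_⟩
  · intro n
    rw [il]
    cases n.bodd
    · exact h01' _
    · exact h01 _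
  · rw [Metric.tendsto_atTop] at hl hl' ⊢
    intro ε hε
    obtain ⟨A, hA⟩ := hl ε hε
    obtain ⟨B, hB⟩ := hl' ε hε
    refine ⟨2 * (A + B), fun n hn => ?_⟩
    have : A + B ≤ n.div2 := by rw [Nat.div2_val]; omega
    rw [il]
    cases n.bodd
    · exact hB _ (by omega)
    · exact hA _ (by omega)

end TwoSided

theorem ca_has_two_sided_approx (α : ℝ) (hα : α ∈ Set.Ioo (0 : ℝ) 1)
    (hca : ∃ a : ℕ → ℚ, IsCompApprox a α) :
    ∃ a : ℕ → ℚ, IsCompApprox a α ∧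
      (∃ᶠ s in atTop, (a s : ℝ) < α) ∧ (∃ᶠ s in atTop, α < (a s : ℝ)) := by
  obtain ⟨a, ha⟩ := hca
  obtain ⟨h1, h2⟩ := TwoSided.up hα.2 ha
  obtain ⟨h3, h4⟩ := TwoSided.up (by linarith [hα.1] : 1 - α < 1) (TwoSided.oneSub ha)
  have h5 := TwoSided.oneSub h3
  rw [sub_sub_cancel] at h5
  refine ⟨_, TwoSided.il_approx h1 h5, ?_, ?_⟩
  · rw [frequently_atTop] at h4 ⊢
    intro n
    obtain ⟨m, hm, h⟩ := h4 n
    refine ⟨2 * m, by omega, ?_⟩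
    simp only [TwoSided.il, Nat.div2_val]
    simp
    linarith
  · rw [frequently_atTop] at h2 ⊢
    intro n
    obtain ⟨m, hm, h⟩ := h2 n
    refine ⟨2 * m + 1, by omega, ?_⟩
    have e : (2 * m + 1) / 2 = m := by omega
    simp only [TwoSided.il, Nat.div2_val, e]
    simpa using h
end

section
/- Every computably approximable real is strongly c.a. 0-speedable: if a real α ∈ (0,1) has a computable approximation, then it has a computable approximation {b_s} such that either α is rational or liminf_{s→∞} |(α − b_{s+1})/(α − b_s)| = 0. -/
open Filter

namespace CA
open Denumerable Encodable

noncomputable def S : Set ℕ := Set.range (@encode ℚ Rat.instEncodable)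

noncomputable instance : DecidablePred (· ∈ S) := @decidableRangeEncode ℚ _

noncomputable instance : Infinite S :=
  Infinite.of_injective _
    (Equiv.ofInjective (@encode ℚ Rat.instEncodable) encode_injective).injective

def e0 (q : ℚ) : ℕ := @encode ℚ Rat.instEncodable q

theorem e0_ofNat (n : ℕ) : e0 (ofNat ℚ n) = (Nat.Subtype.ofNat S n : ℕ) := by
  unfold Rat.instDenumerable Denumerable.ofEncodableOfInfinite
  let := @decidableRangeEncode ℚ Rat.instEncodable
  let : Infinite (Set.range (@encode ℚ Rat.instEncodable)) :=
    Infinite.of_injective _ (Equiv.ofInjective _ encode_injective).injective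
  let := Nat.Subtype.denumerable (Set.range (@encode ℚ Rat.instEncodable))
  erw [Denumerable.ofEquiv_ofNat]
  have := Equiv.apply_symm_apply (@equivRangeEncode ℚ Rat.instEncodable)
    (ofNat (Set.range (@encode ℚ Rat.instEncodable)) n)
  have := congrArg Subtype.val this
  refine Eq.trans this ?_
  rfl

theorem e0_eq (q : ℚ) : e0 q = Nat.pair (Equiv.intEquivNat q.num) q.den := rfl

theorem comp_find {α : Type*} [Primcodable α] (p : α → ℕ → Bool) (hp : Computable₂ p)
    (h : ∀ a, ∃ n, p a n = true) : Computable (fun a => Nat.find (h a)) := by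
  refine (Partrec.rfind (p := fun a n => Part.some (p a n)) hp.partrec₂).of_eq fun a => ?_
  refine Part.eq_some_iff.2 ?_
  refine Nat.mem_rfind.2 ⟨?_, fun {m} hm => ?_⟩
  · have := Nat.find_spec (h a)
    exact Part.mem_some_iff.2 this.symm
  · have := Nat.find_min (h a) hm
    refine Part.mem_some_iff.2 ?_
    simpa using this

theorem code_ofNat (n : ℕ) : Equiv.intEquivNat (n : ℤ) = 2 * n := rfl
theorem code_negSucc (n : ℕ) : Equiv.intEquivNat (Int.negSucc n) = 2 * n + 1 := rfl

theorem code_natAbs (z : ℤ) : z.natAbs = (Equiv.intEquivNat z + 1) / 2 := by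
  cases z with
  | ofNat n => erw [code_ofNat]; simp; omega
  | negSucc n => erw [code_negSucc]; simp; omega

theorem mem_S (m : ℕ) : m ∈ S ↔ (0 < m.unpair.2 ∧ ∀ k < m.unpair.2+1,
    k < 2 ∨ ¬ (((m.unpair.1+1)/2) % k = 0 ∧ m.unpair.2 % k = 0)) := by
  constructor
  · rintro ⟨q, rfl⟩
    change 0 < (Nat.unpair (e0 q)).2 ∧ ∀ k < (Nat.unpair (e0 q)).2 + 1, k < 2 ∨
      ¬ ((((Nat.unpair (e0 q)).1+1)/2) % k = 0 ∧ (Nat.unpair (e0 q)).2 % k = 0)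
    rw [e0_eq, Nat.unpair_pair]
    simp only
    refine ⟨q.den_pos, fun k _ => ?_⟩
    rw [← code_natAbs]
    by_contra hc
    push Not at hc
    have := Nat.dvd_gcd (Nat.dvd_of_mod_eq_zero hc.2.1) (Nat.dvd_of_mod_eq_zero hc.2.2)
    have h1 := q.reduced
    rw [Nat.Coprime] at h1
    rw [h1] at this
    have := Nat.le_of_dvd one_pos this
    omega
  · rintro ⟨h0, h⟩
    obtain ⟨z, hz⟩ := Equiv.intEquivNat.surjective m.unpair.1
    rw [← hz, ← code_natAbs] at h
    refine ⟨⟨z, m.unpair.2, h0.ne', ?_⟩, ?_⟩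
    · by_contra hc
      have hd := Nat.gcd_dvd z.natAbs m.unpair.2
      have hp := Nat.gcd_pos_of_pos_right z.natAbs h0
      have hl := Nat.le_of_dvd h0 hd.2
      rcases h _ (Nat.lt_succ_of_le hl) with h | h
      · unfold Nat.Coprime at hc; omega
      · exact h ⟨Nat.mod_eq_zero_of_dvd hd.1, Nat.mod_eq_zero_of_dvd hd.2⟩
    · change e0 _ = m
      rw [e0_eq]; simp only [hz, Nat.pair_unpair]

theorem prim_S : PrimrecPred (fun m => m ∈ S) := by
  have hR : PrimrecRel (fun k m : ℕ => 
      k < 2 ∨ ¬ (((m.unpair.1+1)/2) % k = 0 ∧ m.unpair.2 % k = 0)) := by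
    have u1 : Primrec (fun x : ℕ × ℕ => x.2.unpair.1) :=
      Primrec.fst.comp (Primrec.unpair.comp Primrec.snd)
    have u2 : Primrec (fun x : ℕ × ℕ => x.2.unpair.2) :=
      Primrec.snd.comp (Primrec.unpair.comp Primrec.snd)
    refine PrimrecPred.primrecRel (p := fun x : ℕ × ℕ => x.1 < 2 ∨ ¬ (((x.2.unpair.1+1)/2) % x.1 = 0 ∧ x.2.unpair.2 % x.1 = 0)) ?_
    refine PrimrecPred.or (Primrec.nat_lt.comp Primrec.fst (Primrec.const 2)) (PrimrecPred.not (PrimrecPred.and ?_ ?_))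
    · exact Primrec.eq.comp (Primrec.nat_mod.comp (Primrec.nat_div.comp (Primrec.succ.comp u1) (Primrec.const 2)) Primrec.fst) (Primrec.const 0)
    · exact Primrec.eq.comp (Primrec.nat_mod.comp u2 Primrec.fst) (Primrec.const 0)
  have u2 : Primrec (fun x : ℕ => x.unpair.2) := Primrec.snd.comp Primrec.unpair
  refine PrimrecPred.of_eq (p := fun m : ℕ => (0 < m.unpair.2 ∧ ∀ k < m.unpair.2+1,
    k < 2 ∨ ¬ (((m.unpair.1+1)/2) % k = 0 ∧ m.unpair.2 % k = 0))) ?_ (fun m => (mem_S m).symm)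
  exact PrimrecPred.and (Primrec.nat_lt.comp (Primrec.const 0) u2)
    (hR.forall_lt.comp (Primrec.succ.comp u2) Primrec.id)

theorem ex_S (x : ℕ) : ∃ n, decide (x + n + 1 ∈ S) = true := by
  obtain ⟨y, hy, hxy⟩ := (Set.infinite_coe_iff.1 (inferInstance : Infinite S)).exists_gt x
  exact ⟨y - x - 1, by simpa [show x + (y - x - 1) + 1 = y by omega] using hy⟩

theorem comp_e0 : Computable e0 := by
  have h1 : Computable₂ (fun x n : ℕ => decide (x + n + 1 ∈ S)) := by
    have : Primrec (fun m => decide (m ∈ S)) := (primrecPred_iff_primrec_decide).1 prim_S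
    exact (this.comp (Primrec.succ.comp (Primrec.nat_add.comp Primrec.fst Primrec.snd))).to_comp
  have h2 := comp_find _ h1 ex_S
  have h3 : Computable (fun n => (Nat.Subtype.ofNat S n : ℕ)) := by
    have := Computable.nat_rec (f := fun n : ℕ => n) (g := fun _ => (Nat.Subtype.ofNat S 0 : ℕ))
      (h := fun (_ : ℕ) (p : ℕ × ℕ) => p.2 + Nat.find (ex_S p.2) + 1) Computable.id (Computable.const _)
      (Computable.succ.comp (Primrec.nat_add.to_comp.comp (Computable.snd.comp Computable.snd) (h2.comp (Computable.snd.comp Computable.snd))))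
    refine this.of_eq fun n => ?_
    induction n with
    | zero => rfl
    | succ n ih =>
      simp only at ih ⊢
      rw [ih]
      simp only [Nat.Subtype.ofNat, Nat.Subtype.succ, decide_eq_true_eq]
  refine (h3.comp Computable.encode).of_eq fun q => ?_
  rw [← e0_ofNat, Denumerable.ofNat_encode]

theorem comp_den : Computable (fun q : ℚ => q.den) := by
  refine ((Primrec.snd.comp Primrec.unpair).to_comp.comp comp_e0).of_eq fun q => ?_
  rw [e0_eq]; simp

def cnum (q : ℚ) : ℕ := Equiv.intEquivNat q.num

theorem comp_cnum : Computable cnum := by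
  refine ((Primrec.fst.comp Primrec.unpair).to_comp.comp comp_e0).of_eq fun q => ?_
  rw [e0_eq]; simp [cnum]

theorem comp_num : Computable (fun q : ℚ => q.num.natAbs) := by
  refine ((Primrec.nat_div.comp Primrec.succ (Primrec.const 2)).to_comp.comp comp_cnum).of_eq fun q => ?_
  rw [code_natAbs]; rfl

theorem cnum_even (q : ℚ) : cnum q % 2 = 0 ↔ 0 ≤ q := by
  rw [← Rat.num_nonneg]
  unfold cnum
  cases q.num with
  | ofNat n => erw [code_ofNat]; simp
  | negSucc n => erw [code_negSucc]; simp

theorem comp_div : Computable (fun x : ℕ × ℕ => (x.1 : ℚ) / (x.2 + 1 : ℕ)) := by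
  let p : ℕ × ℕ → ℕ → Bool := fun x n =>
    decide (cnum (ofNat ℚ n) % 2 = 0) && decide ((ofNat ℚ n).num.natAbs * (x.2 + 1) = x.1 * (ofNat ℚ n).den)
  have key : ∀ x n, p x n = true ↔ ofNat ℚ n = (x.1 : ℚ) / (x.2 + 1 : ℕ) := by
    intro x n
    generalize hq : ofNat ℚ n = q
    have hd : (q.den : ℚ) ≠ 0 := by exact_mod_cast q.den_nz
    have hx : ((x.2 + 1 : ℕ) : ℚ) ≠ 0 := by exact_mod_cast Nat.succ_ne_zero x.2
    simp only [p, hq, Bool.and_eq_true, decide_eq_true_eq, cnum_even]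
    have hmain : 0 ≤ q → (q.num.natAbs * (x.2 + 1) = x.1 * q.den ↔ q = (x.1 : ℚ) / (x.2 + 1 : ℕ)) := by
      intro h0
      have h1 : ((q.num.natAbs : ℕ) : ℚ) = q * q.den := by
        rw [Rat.mul_den_eq_num, ← Int.cast_natCast, Int.natAbs_of_nonneg (Rat.num_nonneg.2 h0)]
      rw [eq_div_iff hx, ← @Nat.cast_inj ℚ, Nat.cast_mul, Nat.cast_mul, h1]
      constructor
      · intro h; apply mul_right_cancel₀ hd; rw [← h]; ring
      · intro h; rw [← h]; ring
    constructor
    · rintro ⟨h0, h⟩; exact (hmain h0).1 h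
    · intro h
      have h0 : 0 ≤ q := by rw [h]; positivity
      exact ⟨h0, (hmain h0).2 h⟩
  have hex : ∀ x, ∃ n, p x n = true := fun x => ⟨@encode ℚ Rat.instDenumerable.toEncodable ((x.1 : ℚ) / (x.2 + 1 : ℕ)), by
    rw [key, Denumerable.ofNat_encode]⟩
  have hp : Computable₂ p := by
    have o : Computable (fun y : (ℕ × ℕ) × ℕ => ofNat ℚ y.2) := (Computable.ofNat ℚ).comp Computable.snd
    have c1 : Computable (fun y : (ℕ × ℕ) × ℕ => decide (cnum (ofNat ℚ y.2) % 2 = 0)) :=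
      (Primrec.eq (α := ℕ)).decide.to_comp.comp (Primrec.nat_mod.to_comp.comp (comp_cnum.comp o) (Computable.const 2)) (Computable.const 0)
    have c2 : Computable (fun y : (ℕ × ℕ) × ℕ => decide ((ofNat ℚ y.2).num.natAbs * (y.1.2 + 1) = y.1.1 * (ofNat ℚ y.2).den)) :=
      (Primrec.eq (α := ℕ)).decide.to_comp.comp
        (Primrec.nat_mul.to_comp.comp (comp_num.comp o) (Computable.succ.comp (Computable.snd.comp Computable.fst)))
        (Primrec.nat_mul.to_comp.comp (Computable.fst.comp Computable.fst) (comp_den.comp o))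
    exact Primrec.and.to_comp.comp c1 c2
  refine ((Computable.ofNat ℚ).comp (comp_find p hp hex)).of_eq fun x => ?_
  exact (key x _).1 (Nat.find_spec (hex x))

theorem prim_pow : Primrec₂ (fun a b : ℕ => a ^ b) := Primrec₂.unpaired'.1 Nat.Primrec.pow

def A (a : ℕ → ℚ) (k s : ℕ) : ℕ := (4 ^ k * (a s).num.natAbs) / (a s).den

def tst (a : ℕ → ℚ) (s k : ℕ) : Bool := decide (s ≤ k) || !decide (A a k s = A a k (s + 1))

theorem tst_ex (a : ℕ → ℚ) (s : ℕ) : ∃ k, tst a s k = true := ⟨s, by simp [tst]⟩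

def K (a : ℕ → ℚ) (s : ℕ) : ℕ := Nat.find (tst_ex a s)

def a' (a : ℕ → ℚ) (s : ℕ) : ℚ :=
  (((a s).num.natAbs * 2 ^ K a s + ((a s).den - (a s).num.natAbs) : ℕ) : ℚ) /
    (((a s).den * 2 ^ K a s - 1) + 1 : ℕ)

def b (a : ℕ → ℚ) (n : ℕ) : ℚ := cond (decide (n % 2 = 0)) (a' a (n / 2)) (a (n / 2))

theorem comp_K {a : ℕ → ℚ} (ha : Computable a) : Computable (K a) := by
  refine comp_find _ ?_ _
  have hA : Computable₂ (A a) := by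
    have o : Computable (fun y : ℕ × ℕ => a y.2) := ha.comp Computable.snd
    exact Primrec.nat_div.to_comp.comp
      (Primrec.nat_mul.to_comp.comp (prim_pow.to_comp.comp (Computable.const 4) Computable.fst)
        (comp_num.comp o)) (comp_den.comp o)
  have c1 : Computable (fun y : ℕ × ℕ => decide (y.1 ≤ y.2)) :=
    (Primrec.nat_le).decide.to_comp
  have c2 : Computable (fun y : ℕ × ℕ => decide (A a y.2 y.1 = A a y.2 (y.1 + 1))) :=
    (Primrec.eq (α := ℕ)).decide.to_comp.comp
      (hA.comp Computable.snd Computable.fst)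
      (hA.comp Computable.snd (Computable.succ.comp Computable.fst))
  exact Primrec.or.to_comp.comp c1 (Primrec.not.to_comp.comp c2)

theorem comp_b {a : ℕ → ℚ} (ha : Computable a) : Computable (b a) := by
  have hK := comp_K ha
  have hn := comp_num.comp ha
  have hd := comp_den.comp ha
  have h2 : Computable (fun s => 2 ^ K a s) := prim_pow.to_comp.comp (Computable.const 2) hK
  have hp : Computable (fun s => (((a s).num.natAbs * 2 ^ K a s + ((a s).den - (a s).num.natAbs),
      (a s).den * 2 ^ K a s - 1) : ℕ × ℕ)) := by
    refine Computable.pair ?_ ?_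
    · exact Primrec.nat_add.to_comp.comp (Primrec.nat_mul.to_comp.comp hn h2)
        (Primrec.nat_sub.to_comp.comp hd hn)
    · exact Primrec.nat_sub.to_comp.comp (Primrec.nat_mul.to_comp.comp hd h2) (Computable.const 1)
  have ha' : Computable (a' a) := (comp_div.comp hp).of_eq fun s => by simp only [a']
  have hh : Computable (fun n : ℕ => n / 2) :=
    (Primrec.nat_div.comp Primrec.id (Primrec.const 2)).to_comp
  have hm : Computable (fun n : ℕ => decide (n % 2 = 0)) :=
    (Primrec.eq (α := ℕ)).decide.to_comp.comp
      (Primrec.nat_mod.comp Primrec.id (Primrec.const 2)).to_comp (Computable.const 0)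
  exact Computable.cond hm (ha'.comp hh) (ha.comp hh)

theorem natAbs_eq {q : ℚ} (h0 : 0 ≤ q) : ((q.num.natAbs : ℕ) : ℚ) = q * q.den := by
  rw [Rat.mul_den_eq_num, ← Int.cast_natCast, Int.natAbs_of_nonneg (Rat.num_nonneg.2 h0)]

theorem a'_eq {a : ℕ → ℚ} (h : ∀ s, a s ∈ Set.Icc (0 : ℚ) 1) (s : ℕ) :
    a' a s = a s + (1 - a s) * (1 / 2) ^ K a s := by
  have hq := natAbs_eq (h s).1
  have hd : (0 : ℚ) < (a s).den := by exact_mod_cast (a s).den_pos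
  have hle : (a s).num.natAbs ≤ (a s).den := by
    have : (((a s).num.natAbs : ℕ) : ℚ) ≤ (a s).den := by
      rw [hq]; exact mul_le_of_le_one_left hd.le (h s).2
    exact_mod_cast this
  have hpos : 1 ≤ (a s).den * 2 ^ K a s := Nat.mul_pos (a s).den_pos (by positivity)
  unfold a'
  rw [Nat.sub_add_cancel hpos]
  push_cast [Nat.cast_sub hle]
  rw [hq, one_div, inv_pow]
  field_simp

theorem A_eq {a : ℕ → ℚ} (h : ∀ s, a s ∈ Set.Icc (0 : ℚ) 1) (k s : ℕ) :
    A a k s = ⌊(4 : ℝ) ^ k * (a s : ℝ)⌋₊ := by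
  have hq := natAbs_eq (h s).1
  have hd : (0 : ℚ) < (a s).den := by exact_mod_cast (a s).den_pos
  have : ((4 : ℝ) ^ k * (a s : ℝ)) = ((4 ^ k * (a s).num.natAbs : ℕ) : ℝ) / ((a s).den : ℕ) := by
    have : (4 : ℚ) ^ k * a s = ((4 ^ k * (a s).num.natAbs : ℕ) : ℚ) / ((a s).den : ℕ) := by
      rw [Nat.cast_mul, hq]; field_simp; push_cast; ring
    have h2 := congrArg (fun q : ℚ => (q : ℝ)) this
    push_cast at h2 ⊢
    exact h2
  rw [this, Nat.floor_div_eq_div]; rfl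

theorem lt_K {a : ℕ → ℚ} {j s : ℕ} (h : j < K a s) : A a j s = A a j (s + 1) := by
  have := Nat.find_min (tst_ex a s) h
  simp [tst] at this
  exact this.2

theorem K_tendsto {a : ℕ → ℚ} {α : ℝ} (hα0 : 0 < α) (h : ∀ s, a s ∈ Set.Icc (0 : ℚ) 1)
    (hl : Tendsto (fun s => (a s : ℝ)) atTop (nhds α)) (hirr : ¬ ∃ q : ℚ, α = (q : ℝ)) :
    Tendsto (K a) atTop atTop := by
  have h1 : ∀ k, ∀ᶠ s in atTop, A a k s = ⌊(4 : ℝ) ^ k * α⌋₊ := by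
    intro k
    have hx : 0 ≤ (4 : ℝ) ^ k * α := by positivity
    have h1 : (⌊(4 : ℝ) ^ k * α⌋₊ : ℝ) < (4 : ℝ) ^ k * α := by
      refine lt_of_le_of_ne (Nat.floor_le hx) fun he => hirr ⟨(⌊(4 : ℝ) ^ k * α⌋₊ : ℚ) / 4 ^ k, ?_⟩
      push_cast
      rw [he]; field_simp
    have h2 := Nat.lt_floor_add_one ((4 : ℝ) ^ k * α)
    have hl' := hl.const_mul ((4 : ℝ) ^ k)
    filter_upwards [hl'.eventually_const_lt h1, hl'.eventually_lt_const h2] with s hs1 hs2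
    rw [A_eq h]
    have hs0 : (0 : ℝ) ≤ a s := by exact_mod_cast (h s).1
    exact (Nat.floor_eq_iff (by positivity)).2 ⟨hs1.le, hs2⟩
  have h2 : ∀ k, ∀ᶠ s in atTop, A a k s = A a k (s + 1) := by
    intro k
    filter_upwards [h1 k, (tendsto_add_atTop_nat 1).eventually (h1 k)] with s p q
    rw [p, q]
  refine tendsto_atTop.2 fun M => ?_
  have h3 : ∀ᶠ s in atTop, ∀ k ∈ Finset.range M, A a k s = A a k (s + 1) :=
    (Filter.eventually_all_finset _).2 fun k _ => h2 k
  filter_upwards [h3, eventually_ge_atTop M] with s p q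
  refine (Nat.le_find_iff _ _).2 fun k hk => ?_
  have := p k (Finset.mem_range.2 hk)
  simp [tst, this]
  omega

theorem true_stage {a : ℕ → ℚ} {α : ℝ} (h : ∀ s, a s ∈ Set.Icc (0 : ℚ) 1)
    (hl : Tendsto (fun s => (a s : ℝ)) atTop (nhds α)) (N : ℕ) :
    ∃ s ≥ N, 1 ≤ K a s → |α - a s| ≤ 4 * ((1 / 2 : ℝ) ^ K a s) ^ 2 := by
  have hex : ∃ m, ∃ s ≥ N, K a s = m := ⟨_, N, le_rfl, rfl⟩
  classical
  obtain ⟨s, hs, hm⟩ := Nat.find_spec hex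
  have hmin : ∀ t ≥ s, K a s ≤ K a t := fun t ht => by
    rw [hm]; exact Nat.find_min' hex ⟨t, le_trans hs ht, rfl⟩
  refine ⟨s, hs, fun hK => ?_⟩
  obtain ⟨j, hj⟩ : ∃ j, K a s = j + 1 := ⟨K a s - 1, by omega⟩
  have hA : ∀ t ≥ s, A a j t = A a j s := by
    intro t ht
    induction t, ht using Nat.le_induction with
    | base => rfl
    | succ t ht ih =>
      rw [← ih]; refine (lt_K ?_).symm
      have := hmin t ht
      omega
  have hb : ∀ t, (A a j t : ℝ) ≤ 4 ^ j * (a t : ℝ) ∧ 4 ^ j * (a t : ℝ) < A a j t + 1 := by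
    intro t
    have h0 : (0 : ℝ) ≤ a t := by exact_mod_cast (h t).1
    rw [A_eq h]
    exact ⟨Nat.floor_le (by positivity), Nat.lt_floor_add_one _⟩
  have hd : ∀ t ≥ s, |(a t : ℝ) - a s| ≤ 1 / 4 ^ j := by
    intro t ht
    have p1 := hb t
    have p2 := hb s
    rw [hA t ht] at p1
    rw [le_div_iff₀ (by positivity), ← abs_of_pos (show (0 : ℝ) < 4 ^ j by positivity),
      ← abs_mul, abs_le]
    constructor <;> nlinarith
  have hlim : |α - a s| ≤ 1 / 4 ^ j :=
    le_of_tendsto ((hl.sub_const _).abs) (eventually_atTop.2 ⟨s, hd⟩)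
  refine hlim.trans (le_of_eq ?_)
  rw [hj, ← pow_mul, mul_comm, pow_mul', pow_succ]
  norm_num
  ring_nf
  norm_num

end CA

theorem ca_is_strongly_zero_speedable (α : ℝ) (hα : α ∈ Set.Ioo (0 : ℝ) 1)
    (hca : ∃ a : ℕ → ℚ, IsCompApprox a α) :
    ∃ b : ℕ → ℚ, IsCompApprox b α ∧
      ((∃ q : ℚ, α = (q : ℝ)) ∨
        Filter.liminf
          (fun s => ((|(α - (b (s + 1) : ℝ)) / (α - (b s : ℝ))| : ℝ) : EReal)) atTop
          = (0 : EReal)) := by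
  obtain ⟨a, hcomp, h01, hl⟩ := hca
  by_cases hirr : ∃ q : ℚ, α = (q : ℝ)
  · exact ⟨a, ⟨hcomp, h01, hl⟩, Or.inl hirr⟩
  have hKt := CA.K_tendsto hα.1 h01 hl hirr
  have hr : Tendsto (fun s => (1 / 2 : ℝ) ^ CA.K a s) atTop (nhds 0) :=
    (tendsto_pow_atTop_nhds_zero_of_lt_one (by norm_num) (by norm_num)).comp hKt
  have hhalf : Tendsto (fun n : ℕ => n / 2) atTop atTop :=
    Nat.tendsto_div_const_atTop (by norm_num)
  refine ⟨CA.b a, ⟨CA.comp_b hcomp, ?_, ?_⟩, Or.inr ?_⟩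
  · intro n
    unfold CA.b
    cases decide (n % 2 = 0)
    · exact h01 _
    · simp only [cond_true]
      rw [CA.a'_eq h01]
      have h1 := (h01 (n / 2)).1
      have h2 := (h01 (n / 2)).2
      have p0 : (0 : ℚ) ≤ (1 / 2) ^ CA.K a (n / 2) := by positivity
      have p1 : (1 / 2 : ℚ) ^ CA.K a (n / 2) ≤ 1 := pow_le_one₀ (by norm_num) (by norm_num)
      constructor <;> nlinarith
  · have hz : Tendsto (fun n => (CA.b a n : ℝ) - a (n / 2)) atTop (nhds 0) := by
      refine squeeze_zero_norm (fun n => ?_) (hr.comp hhalf)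
      simp only [Function.comp, Real.norm_eq_abs]
      unfold CA.b
      cases decide (n % 2 = 0)
      · simp
      · simp only [cond_true]
        rw [CA.a'_eq h01]
        have h1 : (0 : ℝ) ≤ a (n / 2) := by exact_mod_cast (h01 (n / 2)).1
        have h2 : (a (n / 2) : ℝ) ≤ 1 := by exact_mod_cast (h01 (n / 2)).2
        have p0 : (0 : ℝ) ≤ (1 / 2) ^ CA.K a (n / 2) := by positivity
        push_cast
        rw [add_sub_cancel_left, abs_of_nonneg (mul_nonneg (by linarith) p0)]
        nlinarith
    have := hz.add (hl.comp hhalf)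
    simpa using this
  · refine le_antisymm ?_ ?_
    · refine EReal.le_of_forall_lt_iff_le.1 fun ε hε => ?_
      have hε : 0 < ε := by exact_mod_cast hε
      refine Filter.liminf_le_of_frequently_le' ?_
      refine Filter.frequently_atTop.2 fun N => ?_
      have hc : α < (1 + α) / 2 := by linarith [hα.2]
      have hδ : 0 < ε * ((1 - α) / 2) / (4 * (1 + ε)) := by
        have := hα.2
        have : 0 < 1 - α := by linarith
        positivity
      obtain ⟨M, hM⟩ := eventually_atTop.1
        ((hKt.eventually_ge_atTop 1).and
          ((hl.eventually_lt_const hc).and (hr.eventually_lt_const hδ)))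
      obtain ⟨s, hs, hts⟩ := CA.true_stage h01 hl (max M N)
      obtain ⟨g1, g2, g3⟩ := hM s (le_trans (le_max_left _ _) hs)
      have hts := hts g1
      refine ⟨2 * s, by have := le_trans (le_max_right _ _) hs; omega, ?_⟩
      have e1 : CA.b a (2 * s + 1) = a s := by
        simp [CA.b, show (2 * s + 1) / 2 = s by omega, show (2 * s + 1) % 2 = 1 by omega]
      have e2 : CA.b a (2 * s) = a s + (1 - a s) * (1 / 2) ^ CA.K a s := by
        rw [← CA.a'_eq h01]; simp [CA.b]
      rw [e1, e2]
      refine EReal.coe_le_coe_iff.2 ?_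
      rw [abs_div]
      refine div_le_of_le_mul₀ (abs_nonneg _) hε.le ?_
      push_cast
      have rpos : (0 : ℝ) < (1 / 2) ^ CA.K a s := by positivity
      set r := (1 / 2 : ℝ) ^ CA.K a s
      rw [lt_div_iff₀ (by positivity)] at g3
      have t1 : (1 - (a s : ℝ)) * r - |α - a s| ≤ |α - ((a s : ℝ) + (1 - a s) * r)| := by
        have := neg_abs_le (α - ((a s : ℝ) + (1 - a s) * r))
        have := le_abs_self (α - (a s : ℝ))
        linarith
      have t2 : (1 - α) / 2 * r ≤ (1 - (a s : ℝ)) * r := by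
        apply mul_le_mul_of_nonneg_right _ rpos.le
        linarith
      have t3 : (1 - α) / 2 * r - 4 * r ^ 2 ≤ |α - ((a s : ℝ) + (1 - a s) * r)| := by linarith
      have t4 := mul_le_mul_of_nonneg_left t3 hε.le
      have t5 := mul_le_mul_of_nonneg_right g3.le rpos.le
      nlinarith
    · exact Filter.le_liminf_of_le (by isBoundedDefault)
        (Eventually.of_forall fun s => by exact_mod_cast abs_nonneg _)
end
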